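/- Fix an integer k ≥ 4. Then as x → ∞, the number of integers n with 1 ≤ n ≤ x for which the equivalence "n is k-free if and only if s(n) is k-free" fails is o(x). In other words, on a set of positive integers n of asymptotic density 1, n is k-free if and only if s(n) is k-free. -/

import Mathlib

open scoped Classical
open Filter Finset

/-- `sigma1 n` is `σ(n)`, the sum of all positive divisors of `n`. -/
def sigma1 (n : ℕ) : ℕ := ArithmeticFunction.sigma 1 n

/-- `s n` is the sum of the proper divisors of `n`, i.e. `σ(n) − n`. -/
def s (n : ℕ) : ℕ := sigma1 n - n

/-- A positive integer `n` is `k`-free if no `k`-th power of a prime divides it. -/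
def KFree (k n : ℕ) : Prop := ∀ p : ℕ, p.Prime → ¬ p ^ k ∣ n

/-!
Outside a set of small density, no square `b ^ 2` with `b > T` divides `n`, while by Turán's
inequality some prime `q > T` with `T! ^ k ∣ q + 1` divides `n`, necessarily exactly once. Then
`T! ^ k` divides `σ(n) = n + s(n)`, so `p ^ k ∣ n ↔ p ^ k ∣ s(n)` for every prime `p ≤ T`, and the
equivalence can fail only if `p ^ 4 ∣ s(n)` and `p ^ 2 ∤ n` for some prime `p > T`.

For `p` below a power of `log N`, almost every `n ≤ N` has a prime factor `q` with `p ^ 3 < q ≤ Z`,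
where `Z` is small compared with `N`. As `s(m * q) = s(m) * q + σ(m)`, fixing `m = n / q` confines
`q` to one residue class modulo `p ^ 3`, so such `n` have density `O(log Z / p ^ 3)`. With
`r = 2 ^ 2 ^ i` and `Z = 2 ^ r`, one application of Turán's inequality serves all `p` between
`r ^ 16` and `r ^ 32`, and summing over `i` loses only a small density.

For larger `p`, the `n` divisible by `p` are rare, since then `p * q ∣ n` for some `q` with
`p ∣ q + 1`. Otherwise split off a squarefree divisor `a` of `n`, coprime to `m = n / a`, that
exceeds `A = p * (log N) ^ 2` and is minimal for this. If `a` is prime, count residue classes as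
before. If not, then `a ≤ A ^ 2` and, as almost every `n` has at most `(log N) ^ 2` divisors,
`s(a) ≤ (log N) ^ 2 * A`. Two such divisors `a`, `a'` with the same `m` satisfy
`s(a) * a' ≡ s(a') * a` modulo `p ^ 4`, and both sides are less than `p ^ 4`, so
`s(a) / a = s(a') / a'`, which for squarefree integers forces `a = a'`. Hence there is at most one
`n` for each `m ≤ N / A`, and `∑ N / A` over the primes `p ≤ N` is `O(N / log N)`.
-/

/-! ### Counting positive integers up to a bound -/

/-- The number of integers `1 ≤ n ≤ N` satisfying `P`, as a real number, so that it can be compared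
with the densities bounding it. -/
noncomputable def countUpTo (N : ℕ) (P : ℕ → Prop) : ℝ := #{n ∈ Icc 1 N | P n}

section Counting

variable {N : ℕ} {P Q : ℕ → Prop}

lemma countUpTo_nonneg : 0 ≤ countUpTo N P := Nat.cast_nonneg _

lemma countUpTo_mono (h : ∀ n, 1 ≤ n → n ≤ N → P n → Q n) : countUpTo N P ≤ countUpTo N Q :=
  Nat.cast_le.2 <| card_le_card fun n hn ↦ by
    simp only [mem_filter, mem_Icc] at hn ⊢
    exact ⟨hn.1, h n hn.1.1 hn.1.2 hn.2⟩

lemma countUpTo_exists_le {ι : Type*} (J : Finset ι) (P : ι → ℕ → Prop) :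
    countUpTo N (fun n ↦ ∃ j ∈ J, P j n) ≤ ∑ j ∈ J, countUpTo N (P j) := by
  unfold countUpTo
  rw [← Nat.cast_sum, Nat.cast_le]
  refine (card_le_card fun n hn ↦ ?_).trans card_biUnion_le
  simp only [mem_filter, mem_biUnion] at hn ⊢
  obtain ⟨hn, j, hj, hP⟩ := hn
  exact ⟨j, hj, hn, hP⟩

lemma countUpTo_or_le (P Q : ℕ → Prop) :
    countUpTo N (fun n ↦ P n ∨ Q n) ≤ countUpTo N P + countUpTo N Q := by
  refine le_trans (Nat.cast_le.2 ?_) (Nat.cast_add _ _).le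
  simpa only [filter_or] using card_union_le _ _

lemma countUpTo_mul_le_sum {c : ℝ} {g : ℕ → ℝ} (hg : ∀ n, 0 ≤ g n)
    (h : ∀ n, 1 ≤ n → n ≤ N → P n → c ≤ g n) : countUpTo N P * c ≤ ∑ n ∈ Icc 1 N, g n := by
  rw [countUpTo, ← nsmul_eq_mul]
  refine (card_nsmul_le_sum _ _ _ fun n hn ↦ ?_).trans
    (sum_le_sum_of_subset_of_nonneg (filter_subset _ _) fun _ _ _ ↦ hg _)
  simp only [mem_filter, mem_Icc] at hn
  exact h n hn.1.1 hn.1.2 hn.2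

lemma countUpTo_dvd (N d : ℕ) : countUpTo N (d ∣ ·) = (N / d : ℕ) := by
  rw [countUpTo, ← Nat.Ioc_filter_dvd_card_eq_div N d]
  congr! 3

lemma countUpTo_dvd_le (N d : ℕ) : countUpTo N (d ∣ ·) ≤ N / d :=
  (countUpTo_dvd N d).trans_le Nat.cast_div_le

lemma sum_Ioc_one_div_sq_le {T : ℕ} (hT : T ≠ 0) (N : ℕ) :
    ∑ b ∈ Ioc T N, (1 : ℝ) / (b : ℝ) ^ 2 ≤ 1 / T := by
  rcases le_total T N with h | h
  · simp only [one_div]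
    exact (sum_Ioc_inv_sq_le_sub hT h).trans (sub_le_self _ (by positivity))
  · rw [Ioc_eq_empty_of_le h]
    simp

lemma countUpTo_exists_sq_dvd_le {T : ℕ} (hT : T ≠ 0) (N : ℕ) :
    countUpTo N (fun n ↦ ∃ b, T < b ∧ b ^ 2 ∣ n) ≤ N / T := by
  calc countUpTo N (fun n ↦ ∃ b, T < b ∧ b ^ 2 ∣ n)
      ≤ countUpTo N (fun n ↦ ∃ b ∈ Ioc T N, b ^ 2 ∣ n) := by
        refine countUpTo_mono fun n hn hN ⟨b, hb, hd⟩ ↦ ⟨b, mem_Ioc.2 ⟨hb, ?_⟩, hd⟩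
        exact (Nat.le_self_pow two_ne_zero b).trans ((Nat.le_of_dvd hn hd).trans hN)
    _ ≤ ∑ b ∈ Ioc T N, (N : ℝ) * (1 / (b : ℝ) ^ 2) := by
        refine (countUpTo_exists_le _ _).trans (sum_le_sum fun b _ ↦ ?_)
        exact (countUpTo_dvd_le N (b ^ 2)).trans_eq (by push_cast; ring)
    _ ≤ N * (1 / T) := by
        rw [← mul_sum]
        gcongr
        exact sum_Ioc_one_div_sq_le hT N
    _ = N / T := by ring

end Counting

/-! ### Turán's inequality -/

section Turan

variable (N : ℕ) (S : Finset ℕ)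

lemma sum_card_filter_dvd :
    ∑ n ∈ Icc 1 N, (#{q ∈ S | q ∣ n} : ℝ) = ∑ q ∈ S, ((N / q : ℕ) : ℝ) := by
  simp only [card_filter, Nat.cast_sum]
  rw [sum_comm]
  refine sum_congr rfl fun q _ ↦ ?_
  simp [← countUpTo_dvd, countUpTo]

lemma le_sum_card_filter_dvd :
    N * ∑ q ∈ S, (1 : ℝ) / q - #S ≤ ∑ n ∈ Icc 1 N, (#{q ∈ S | q ∣ n} : ℝ) := by
  rw [sum_card_filter_dvd, card_eq_sum_ones, Nat.cast_sum, mul_sum, ← sum_sub_distrib]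
  refine sum_le_sum fun q _ ↦ ?_
  rw [mul_one_div, ← Nat.floor_div_eq_div (K := ℝ), Nat.cast_one]
  exact (Nat.sub_one_lt_floor _).le

lemma sum_card_filter_dvd_sq_le (hS : (S : Set ℕ).Pairwise Nat.Coprime) :
    ∑ n ∈ Icc 1 N, (#{q ∈ S | q ∣ n} : ℝ) ^ 2 ≤
      N * (∑ q ∈ S, (1 : ℝ) / q) ^ 2 + N * ∑ q ∈ S, (1 : ℝ) / q := by
  have pair_count (q) (hq : q ∈ S) (r) (hr : r ∈ S) : countUpTo N (fun n ↦ q ∣ n ∧ r ∣ n) ≤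
      N * ((1 / q) * (1 / r)) + if q = r then N * (1 / (q : ℝ)) else 0 := by
    split_ifs with h
    · subst h
      have := countUpTo_dvd_le N q
      simp only [and_self]
      rw [mul_one_div (N : ℝ)]
      linarith [show (0 : ℝ) ≤ N * ((1 / q) * (1 / q)) by positivity]
    · have hdvd (n : ℕ) : q ∣ n ∧ r ∣ n ↔ q * r ∣ n :=
        ⟨fun hqr ↦ Nat.Coprime.mul_dvd_of_dvd_of_dvd (hS hq hr h) hqr.1 hqr.2,
          fun hqr ↦ ⟨dvd_of_mul_right_dvd hqr, dvd_of_mul_left_dvd hqr⟩⟩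
      simp only [hdvd]
      exact (countUpTo_dvd_le N (q * r)).trans_eq (by push_cast; ring)
  have expand (n : ℕ) : (#{q ∈ S | q ∣ n} : ℝ) ^ 2 =
      ∑ q ∈ S, ∑ r ∈ S, if q ∣ n ∧ r ∣ n then (1 : ℝ) else 0 := by
    simp only [card_filter, Nat.cast_sum, sq, sum_mul_sum]
    refine sum_congr rfl fun q _ ↦ sum_congr rfl fun r _ ↦ ?_
    by_cases q ∣ n <;> simp [*]
  calc ∑ n ∈ Icc 1 N, (#{q ∈ S | q ∣ n} : ℝ) ^ 2
      = ∑ q ∈ S, ∑ r ∈ S, countUpTo N (fun n ↦ q ∣ n ∧ r ∣ n) := by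
        simp only [expand]
        rw [sum_comm]
        refine sum_congr rfl fun q _ ↦ ?_
        rw [sum_comm]
        simp [countUpTo]
    _ ≤ ∑ q ∈ S, ∑ r ∈ S,
          (N * ((1 / q) * (1 / r)) + if q = r then N * (1 / (q : ℝ)) else 0) :=
        sum_le_sum fun q hq ↦ sum_le_sum fun r hr ↦ pair_count q hq r hr
    _ = N * (∑ q ∈ S, (1 : ℝ) / q) ^ 2 + N * ∑ q ∈ S, (1 : ℝ) / q := by
        rw [sq, sum_mul_sum]
        simp only [sum_add_distrib, mul_sum, sum_ite_eq, sum_ite_mem, inter_self]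

lemma sum_card_filter_dvd_sub_sq_le (hS : (S : Set ℕ).Pairwise Nat.Coprime) :
    ∑ n ∈ Icc 1 N, ((#{q ∈ S | q ∣ n} : ℝ) - ∑ q ∈ S, (1 : ℝ) / q) ^ 2 ≤
      (N + 2 * #S) * ∑ q ∈ S, (1 : ℝ) / q := by
  have first := le_sum_card_filter_dvd N S
  have second := sum_card_filter_dvd_sq_le N S hS
  set E := ∑ q ∈ S, (1 : ℝ) / q
  have : 0 ≤ E := by positivity
  have expand : ∑ n ∈ Icc 1 N, ((#{q ∈ S | q ∣ n} : ℝ) - E) ^ 2 =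
      ∑ n ∈ Icc 1 N, (#{q ∈ S | q ∣ n} : ℝ) ^ 2
        - 2 * E * ∑ n ∈ Icc 1 N, (#{q ∈ S | q ∣ n} : ℝ) + N * E ^ 2 := by
    simp only [sub_sq, sum_add_distrib, sum_sub_distrib, sum_const, Nat.card_Icc, nsmul_eq_mul,
      mul_sum]
    congr 2
    exact sum_congr rfl fun _ _ ↦ by ring
  rw [expand]
  nlinarith [mul_le_mul_of_nonneg_left first (by positivity : 0 ≤ 2 * E)]

theorem countUpTo_forall_not_dvd_mul_le (hS : (S : Set ℕ).Pairwise Nat.Coprime) :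
    countUpTo N (fun n ↦ ∀ q ∈ S, ¬ q ∣ n) * ∑ q ∈ S, (1 : ℝ) / q ≤ N + 2 * #S := by
  have variance := sum_card_filter_dvd_sub_sq_le N S hS
  set E := ∑ q ∈ S, (1 : ℝ) / q
  have hE : 0 ≤ E := by positivity
  have chebyshev : countUpTo N (fun n ↦ ∀ q ∈ S, ¬ q ∣ n) * E ^ 2 ≤ (N + 2 * #S) * E := by
    refine (countUpTo_mul_le_sum (fun n ↦ sq_nonneg _) fun n _ _ hn ↦ ?_).trans variance
    simp [filter_false_of_mem hn]
  rcases hE.eq_or_lt with h | h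
  · rw [← h, mul_zero]
    positivity
  · exact le_of_mul_le_mul_right (by linarith) h

lemma countUpTo_forall_not_dvd_le {K : ℝ} (hS : (S : Set ℕ).Pairwise Nat.Coprime) (hcard : #S ≤ N)
    (hK : 0 < K) (hKS : K ≤ ∑ q ∈ S, (1 : ℝ) / q) :
    countUpTo N (fun n ↦ ∀ q ∈ S, ¬ q ∣ n) ≤ 3 * N / K := by
  rw [le_div_iff₀ hK]
  calc _ ≤ countUpTo N (fun n ↦ ∀ q ∈ S, ¬ q ∣ n) * ∑ q ∈ S, (1 : ℝ) / q := by
        gcongr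
        exact countUpTo_nonneg
    _ ≤ N + 2 * #S := countUpTo_forall_not_dvd_mul_le N S hS
    _ ≤ N + 2 * N := by gcongr
    _ = 3 * N := by ring

end Turan

/-! ### Primes in arithmetic progressions -/

section Dirichlet

open ArithmeticFunction.vonMangoldt Topology

variable {q : ℕ} (a : ZMod q)

lemma sub_one_mul_residueClass_div_rpow_le {x : ℝ} (hx : x ∈ Set.Ioc 1 2) (n : ℕ) :
    (x - 1) * (residueClass a n / (n : ℝ) ^ x) ≤ (if n.Prime then 0 else residueClass a n) / n +
      if n.Prime ∧ (n : ZMod q) = a then (1 : ℝ) / n else 0 := by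
  obtain ⟨hx1, hx2⟩ := hx
  rcases n.eq_zero_or_pos with rfl | hn
  · simp [residueClass_apply_zero, Nat.not_prime_zero]
  have hn' : (0 : ℝ) < n := mod_cast hn
  have split_pow : (n : ℝ) ^ x = n ^ (x - 1) * n := by
    rw [← Real.rpow_add_one hn'.ne', sub_add_cancel]
  rw [split_pow, ← div_div, ← mul_div_assoc]
  split_ifs with hp hpa hpa
  · have log_le : (x - 1) * Real.log n ≤ (n : ℝ) ^ (x - 1) := by
      rw [Real.rpow_def_of_pos hn']
      linarith [Real.add_one_le_exp (Real.log n * (x - 1))]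
    rw [zero_div, zero_add, residueClass, Set.indicator_of_mem (by exact hpa.2),
      ArithmeticFunction.vonMangoldt_apply_prime hp, ← mul_div_assoc]
    gcongr
    exact div_le_one_of_le₀ log_le (by positivity)
  · have : residueClass a n = 0 :=
      Set.indicator_of_notMem (s := {n : ℕ | (n : ZMod q) = a}) (fun h ↦ hpa ⟨hp, h⟩) _
    simp [this]
  · exact absurd hpa.1 hp
  · rw [add_zero]
    gcongr
    have one_le_pow : 1 ≤ (n : ℝ) ^ (x - 1) :=
      Real.one_le_rpow (mod_cast hn) (by linarith)
    have := residueClass_nonneg a n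
    rw [← mul_div_assoc, div_le_iff₀ (by positivity)]
    nlinarith

theorem not_summable_one_div_prime_residueClass [NeZero q] {a : ZMod q} (ha : IsUnit a) :
    ¬ Summable fun n : ℕ ↦ if n.Prime ∧ (n : ZMod q) = a then (1 : ℝ) / n else 0 := by
  intro summable
  obtain ⟨C, hC⟩ := LSeries_residueClass_lower_bound ha
  have near_one : ∀ᶠ x : ℝ in 𝓝[>] 1, x ∈ Set.Ioc (1 : ℝ) 2 := Ioc_mem_nhdsGT one_lt_two
  have tendsto_sub_one : Tendsto (fun x : ℝ ↦ x - 1) (𝓝[>] 1) (𝓝 0) :=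
    tendsto_nhdsWithin_of_tendsto_nhds (Continuous.tendsto' (by fun_prop) _ _ (sub_self 1))
  have term_tendsto (n : ℕ) :
      Tendsto (fun x : ℝ ↦ (x - 1) * (residueClass a n / (n : ℝ) ^ x)) (𝓝[>] 1) (𝓝 0) := by
    rcases eq_or_ne n 0 with rfl | hn
    · simp [residueClass_apply_zero]
    have : Tendsto (fun x : ℝ ↦ residueClass a n / (n : ℝ) ^ x) (𝓝[>] 1)
        (𝓝 (residueClass a n / (n : ℝ) ^ (1 : ℝ))) :=
      tendsto_nhdsWithin_of_tendsto_nhds <| tendsto_const_nhds.div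
        (Real.continuousAt_const_rpow (mod_cast hn)).tendsto (by simp [hn])
    simpa using tendsto_sub_one.mul this
  have series_tendsto : Tendsto
      (fun x : ℝ ↦ ∑' n : ℕ, (x - 1) * (residueClass a n / (n : ℝ) ^ x)) (𝓝[>] 1) (𝓝 0) := by
    rw [← tsum_zero (α := ℝ) (β := ℕ)]
    refine tendsto_tsum_of_dominated_convergence
      ((summable_residueClass_non_primes_div a).add summable) term_tendsto ?_
    filter_upwards [near_one] with x hx n
    have := residueClass_nonneg a n
    have := hx.1
    rw [Real.norm_of_nonneg (mul_nonneg (by linarith) (by positivity))]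
    exact sub_one_mul_residueClass_div_rpow_le a hx n
  have lower_tendsto : Tendsto (fun x : ℝ ↦ (q.totient : ℝ)⁻¹ - C * (x - 1)) (𝓝[>] 1)
      (𝓝 (q.totient : ℝ)⁻¹) := by
    simpa using (tendsto_const_nhds (x := (q.totient : ℝ)⁻¹)).sub (tendsto_sub_one.const_mul C)
  have totient_inv_le : (q.totient : ℝ)⁻¹ ≤ 0 := by
    refine le_of_tendsto_of_tendsto lower_tendsto series_tendsto ?_
    filter_upwards [near_one] with x hx
    have hx1 : 0 < x - 1 := sub_pos.2 hx.1
    rw [tsum_mul_left]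
    calc (q.totient : ℝ)⁻¹ - C * (x - 1) = (x - 1) * ((q.totient : ℝ)⁻¹ / (x - 1) - C) := by
          field_simp
      _ ≤ _ := by gcongr; exact hC hx
  have : 0 < (q.totient : ℝ)⁻¹ := inv_pos.2 (mod_cast q.totient.pos_of_neZero)
  linarith

end Dirichlet

lemma exists_finset_prime_dvd_succ_le_sum_one_div {D : ℕ} (hD : D ≠ 0) (T : ℕ) (K : ℝ) :
    ∃ S : Finset ℕ, (∀ q ∈ S, q.Prime ∧ T < q ∧ D ∣ q + 1) ∧ K ≤ ∑ q ∈ S, (1 : ℝ) / q := by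
  have : NeZero D := ⟨hD⟩
  have dvd_iff (n : ℕ) : (n : ZMod D) = -1 ↔ D ∣ n + 1 := by
    rw [← ZMod.natCast_eq_zero_iff, Nat.cast_add_one, eq_neg_iff_add_eq_zero]
  have diverges := not_summable_one_div_prime_residueClass (isUnit_one (M := ZMod D)).neg
  simp only [dvd_iff] at diverges
  rw [← summable_nat_add_iff (T + 1),
    not_summable_iff_tendsto_nat_atTop_of_nonneg fun n ↦ by positivity] at diverges
  obtain ⟨M, hM⟩ := (diverges.eventually_ge_atTop K).exists
  rw [range_eq_Ico, sum_Ico_add' (fun n ↦ if n.Prime ∧ D ∣ n + 1 then (1 : ℝ) / n else 0),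
    ← sum_filter] at hM
  refine ⟨_, fun q hq ↦ ?_, hM⟩
  simp only [mem_filter, mem_Ico] at hq
  exact ⟨hq.2.1, by omega, hq.2.2⟩

/-! ### Reciprocals of the primes in doubly exponential ranges -/

/-- The sum of the reciprocals of the primes in the half-open interval `(a, b]`. -/
noncomputable def primeRecipSum (a b : ℕ) : ℝ := ∑ q ∈ Ioc a b with q.Prime, (1 : ℝ) / q

section PrimeRecipSum

open Chebyshev

lemma primeRecipSum_add {a b c : ℕ} (hab : a ≤ b) (hbc : b ≤ c) :
    primeRecipSum a b + primeRecipSum b c = primeRecipSum a c := by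
  simp only [primeRecipSum, sum_filter]
  exact sum_Ioc_consecutive _ hab hbc

lemma le_primeRecipSum_of_forall_le {g : ℕ → ℕ} (hg : Monotone g) {a b : ℕ} (hab : a ≤ b) {c : ℝ}
    (h : ∀ i, a ≤ i → i < b → c ≤ primeRecipSum (g i) (g (i + 1))) :
    ((b : ℝ) - a) * c ≤ primeRecipSum (g a) (g b) := by
  induction b, hab using Nat.le_induction with
  | base => simp [primeRecipSum]
  | succ b hab ih =>
    have last := h b hab b.lt_succ_self
    have init := ih fun i hi hib ↦ h i hi (hib.trans b.lt_succ_self)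
    rw [← primeRecipSum_add (hg hab) (hg b.le_succ)]
    push_cast
    linarith

lemma eventually_log_add_sqrt_mul_log_le :
    ∀ᶠ y : ℝ in atTop, Real.log (y + 1) + 2 * √y * Real.log y ≤ y / 2 := by
  have log_le := (isLittleO_log_rpow_atTop (show (0 : ℝ) < 1 / 2 by norm_num)).bound
    (show (0 : ℝ) < 1 / 16 by norm_num)
  filter_upwards [log_le, eventually_ge_atTop 16] with y hy hy16
  have log_nonneg : 0 ≤ Real.log y := Real.log_nonneg (by linarith)
  rw [← Real.sqrt_eq_rpow, Real.norm_of_nonneg log_nonneg,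
    Real.norm_of_nonneg (Real.sqrt_nonneg y)] at hy
  have sq_sqrt := Real.sq_sqrt (show 0 ≤ y by linarith)
  have four_le_sqrt : 4 ≤ √y := Real.le_sqrt_of_sq_le (by linarith)
  have log_add_one_le : Real.log (y + 1) ≤ 2 * Real.log y := by
    rw [two_mul, ← Real.log_mul (by linarith) (by linarith)]
    exact Real.log_le_log (by linarith) (by nlinarith)
  nlinarith

lemma eventually_le_theta_sub_theta :
    ∀ᶠ m : ℕ in atTop, (m : ℝ) ≤ θ (16 * m : ℕ) - θ m := by
  have tendsto_mul : Tendsto (fun m : ℕ ↦ ((16 * m : ℕ) : ℝ)) atTop atTop :=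
    tendsto_natCast_atTop_atTop.comp (tendsto_id.const_mul_atTop' (by norm_num))
  filter_upwards [tendsto_mul.eventually eventually_log_add_sqrt_mul_log_le] with m hm
  have lower := theta_ge (16 * m)
  have upper := theta_le_log4_mul_x (Nat.cast_nonneg' m)
  have log_four : Real.log 4 = 2 * Real.log 2 := by
    rw [show (4 : ℝ) = 2 ^ 2 by norm_num, Real.log_pow, Nat.cast_two]
  rw [log_four] at upper
  push_cast at hm lower ⊢
  nlinarith [Real.log_two_gt_d9]

lemma theta_sub_theta_eq_sum_log {a b : ℕ} (hab : a ≤ b) :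
    θ b - θ a = ∑ q ∈ Ioc a b with q.Prime, Real.log q := by
  simp only [theta, Nat.floor_natCast, sum_filter]
  rw [← sum_Ioc_consecutive _ a.zero_le hab, add_sub_cancel_left]

lemma theta_sub_theta_le_mul_primeRecipSum {a b : ℕ} (hab : a ≤ b) :
    θ b - θ a ≤ b * Real.log b * primeRecipSum a b := by
  rw [theta_sub_theta_eq_sum_log hab, primeRecipSum, mul_sum]
  refine sum_le_sum fun q hq ↦ ?_
  simp only [mem_filter, mem_Ioc] at hq
  have hq0 : (0 : ℝ) < q := mod_cast hq.2.pos
  have hqb : (q : ℝ) ≤ b := mod_cast hq.1.2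
  have := Real.log_natCast_nonneg q
  rw [mul_one_div, le_div_iff₀ hq0, mul_comm (b : ℝ)]
  gcongr

lemma eventually_le_primeRecipSum_pow :
    ∀ᶠ j : ℕ in atTop, 1 / (48 * ((j : ℝ) + 1)) ≤ primeRecipSum (16 ^ j) (16 ^ (j + 1)) := by
  have tendsto_pow : Tendsto (fun j : ℕ ↦ 16 ^ j) atTop atTop :=
    tendsto_pow_atTop_atTop_of_one_lt (by norm_num)
  filter_upwards [tendsto_pow.eventually eventually_le_theta_sub_theta] with j hj
  rw [mul_comm, ← pow_succ] at hj
  have upper := theta_sub_theta_le_mul_primeRecipSum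
    (Nat.pow_le_pow_right (by norm_num : 0 < 16) j.le_succ)
  have log_sixteen_le : Real.log 16 ≤ 3 := by
    rw [show (16 : ℝ) = 2 ^ 4 by norm_num, Real.log_pow]
    push_cast
    linarith [Real.log_two_lt_d9]
  have hnonneg : 0 ≤ primeRecipSum (16 ^ j) (16 ^ (j + 1)) := sum_nonneg fun _ _ ↦ by positivity
  rw [Nat.succ_eq_add_one] at upper
  set R := primeRecipSum (16 ^ j) (16 ^ (j + 1))
  have chain : (16 : ℝ) ^ j * 1 ≤ 16 ^ j * (48 * (j + 1) * R) := by
    calc (16 : ℝ) ^ j * 1 ≤ 16 ^ (j + 1) * ((j + 1) * Real.log 16) * R := by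
          simpa [Real.log_pow] using hj.trans upper
      _ ≤ 16 ^ (j + 1) * ((j + 1) * 3) * R := by gcongr
      _ = 16 ^ j * (48 * (j + 1) * R) := by ring
  rw [div_le_iff₀' (by positivity)]
  exact le_of_mul_le_mul_left chain (by positivity)

lemma eventually_le_primeRecipSum_pow_two_pow :
    ∀ᶠ i : ℕ in atTop, (1 : ℝ) / 96 ≤ primeRecipSum (16 ^ 2 ^ i) (16 ^ 2 ^ (i + 1)) := by
  obtain ⟨J, hJ⟩ := eventually_atTop.1 eventually_le_primeRecipSum_pow
  filter_upwards [eventually_ge_atTop J] with i hi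
  have mono : Monotone fun j : ℕ ↦ 16 ^ j := pow_right_mono₀ (by norm_num)
  have block (j : ℕ) (hij : 2 ^ i ≤ j) (hj : j < 2 ^ (i + 1)) :
      1 / (48 * 2 ^ (i + 1)) ≤ primeRecipSum (16 ^ j) (16 ^ (j + 1)) := by
    refine le_trans ?_ (hJ j (hi.trans (Nat.lt_two_pow_self.le.trans hij)))
    gcongr
    exact mod_cast hj
  refine le_trans (le_of_eq ?_)
    (le_primeRecipSum_of_forall_le mono (Nat.pow_le_pow_right two_pos i.le_succ) block)
  rw [Nat.succ_eq_add_one, pow_succ, pow_succ]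
  push_cast
  field_simp
  norm_num

theorem exists_forall_le_primeRecipSum : ∃ s₀ : ℕ, ∀ s t, s₀ ≤ s → s ≤ t →
    ((t : ℝ) - s) / 96 ≤ primeRecipSum (2 ^ 2 ^ s) (2 ^ 2 ^ t) := by
  obtain ⟨J, hJ⟩ := eventually_atTop.1 eventually_le_primeRecipSum_pow_two_pow
  have rebase (i : ℕ) : 16 ^ 2 ^ i = 2 ^ 2 ^ (i + 2) := by
    rw [show 16 = 2 ^ 2 ^ 2 by norm_num, ← pow_mul, pow_add, mul_comm]
  simp only [rebase] at hJ
  have mono : Monotone fun i : ℕ ↦ 2 ^ 2 ^ i :=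
    (pow_right_mono₀ one_le_two).comp (pow_right_mono₀ one_le_two)
  refine ⟨J + 2, fun s t hs hst ↦ ?_⟩
  rw [div_eq_mul_one_div]
  refine le_primeRecipSum_of_forall_le mono hst fun i hi _ ↦ ?_
  obtain ⟨i, rfl⟩ := Nat.exists_eq_add_of_le' (show 2 ≤ i by omega)
  simpa only [add_right_comm] using hJ i (by omega)

end PrimeRecipSum

/-! ### The functions `σ` and `s` -/

section SigmaAndS

lemma sigma1_eq_sum_divisors (n : ℕ) : sigma1 n = ∑ d ∈ n.divisors, d :=
  ArithmeticFunction.sigma_one_apply n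

lemma s_eq_sum_properDivisors (n : ℕ) : s n = ∑ d ∈ n.properDivisors, d := by
  rw [s, sigma1_eq_sum_divisors, Nat.sum_divisors_eq_sum_properDivisors_add_self,
    Nat.add_sub_cancel]

lemma s_add_self (n : ℕ) : s n + n = sigma1 n := by
  rw [s_eq_sum_properDivisors, sigma1_eq_sum_divisors,
    Nat.sum_divisors_eq_sum_properDivisors_add_self]

lemma s_pos {n : ℕ} (hn : 1 < n) : 0 < s n := by
  rw [s_eq_sum_properDivisors]
  exact sum_pos' (fun _ _ ↦ Nat.zero_le _) ⟨1, Nat.one_mem_properDivisors_iff_one_lt.2 hn, one_pos⟩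

lemma sigma1_pos {n : ℕ} (hn : n ≠ 0) : 0 < sigma1 n := by
  have := s_add_self n
  omega

lemma sigma1_mul {a b : ℕ} (h : a.Coprime b) : sigma1 (a * b) = sigma1 a * sigma1 b :=
  ArithmeticFunction.isMultiplicative_sigma.map_mul_of_coprime h

lemma sigma1_prime {q : ℕ} (hq : q.Prime) : sigma1 q = q + 1 := by
  rw [sigma1_eq_sum_divisors, hq.sum_divisors, add_comm]

lemma s_mul_prime {m q : ℕ} (hq : q.Prime) (hqm : ¬ q ∣ m) : s (m * q) = s m * q + sigma1 m := by
  have total := s_add_self (m * q)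
  rw [sigma1_mul (hq.coprime_iff_not_dvd.2 hqm).symm, sigma1_prime hq] at total
  have := s_add_self m
  nlinarith

lemma sigma1_le_sq (n : ℕ) : sigma1 n ≤ n ^ 2 := by
  rw [sigma1_eq_sum_divisors, sq]
  exact (sum_le_card_nsmul _ _ n fun d hd ↦ Nat.divisor_le hd).trans
    (Nat.mul_le_mul_right _ n.card_divisors_le_self)

lemma s_le_card_divisors_mul {a A : ℕ} (h : ∀ d ∈ a.properDivisors, d ≤ A) :
    s a ≤ #a.divisors * A := by
  rw [s_eq_sum_properDivisors]
  exact (sum_le_card_nsmul _ _ A h).trans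
    (Nat.mul_le_mul_right _ (card_le_card Nat.properDivisors_subset_divisors))

lemma exists_prime_dvd_succ_of_dvd_sigma1 {a p : ℕ} (ha : Squarefree a) (hp : p.Prime)
    (h : p ∣ sigma1 a) : ∃ q, q.Prime ∧ q ∣ a ∧ p ∣ q + 1 := by
  have sigma1_prod := ArithmeticFunction.isMultiplicative_sigma.map_prod_of_subset_primeFactors
    (f := ArithmeticFunction.sigma 1) a a.primeFactors subset_rfl
  rw [Nat.prod_primeFactors_of_squarefree ha] at sigma1_prod
  rw [sigma1, sigma1_prod, hp.prime.dvd_finsetProd_iff] at h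
  obtain ⟨q, hq, hpq⟩ := h
  have hq_prime := Nat.prime_of_mem_primeFactors hq
  exact ⟨q, hq_prime, Nat.dvd_of_mem_primeFactors hq, by rwa [← sigma1_prime hq_prime]⟩

-- The largest prime factor `P` of `a` divides some `q + 1` with `q ≤ P` prime, so `P = 3`, `q = 2`.
lemma eq_one_or_eq_six_of_dvd_sigma1 {a : ℕ} (ha : Squarefree a) (h : a ∣ sigma1 a) :
    a = 1 ∨ a = 6 := by
  rw [or_iff_not_imp_left]
  intro ha1
  obtain ⟨P, hPmem, hPmax⟩ := a.primeFactors.exists_max_image id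
    (Nat.nonempty_primeFactors.2 (by have := ha.ne_zero; omega))
  have hP := Nat.prime_of_mem_primeFactors hPmem
  have hPa := Nat.dvd_of_mem_primeFactors hPmem
  obtain ⟨q, hq, hqa, hPq⟩ := exists_prime_dvd_succ_of_dvd_sigma1 ha hP (hPa.trans h)
  have hqP : q ≤ P := hPmax q (hq.mem_primeFactors hqa ha.ne_zero)
  obtain ⟨rfl, rfl⟩ : P = 3 ∧ q = 2 := by
    have succ_eq : q + 1 = P := by
      obtain ⟨c, hc⟩ := hPq
      have : c < 2 := by nlinarith [hP.two_le]
      interval_cases c <;> omega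
    have := hq.eq_two_or_odd
    have := hP.eq_two_or_odd
    have := hq.two_le
    omega
  refine Nat.dvd_antisymm ?_ (Nat.Coprime.mul_dvd_of_dvd_of_dvd (by norm_num) hqa hPa)
  rw [← Nat.prod_primeFactors_of_squarefree ha]
  have subset : a.primeFactors ⊆ {2, 3} := fun r hr ↦ by
    have := hPmax r hr
    have := (Nat.prime_of_mem_primeFactors hr).two_le
    simp only [id, mem_insert, mem_singleton] at *
    omega
  exact (prod_dvd_prod_of_subset _ _ _ subset).trans (by simp)

lemma eq_of_coprime_of_sigma1_mul_eq {a b : ℕ} (hab : a.Coprime b) (ha : Squarefree a)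
    (hb : Squarefree b) (h : sigma1 a * b = sigma1 b * a) : a = b := by
  have a_dvd : a ∣ sigma1 a := hab.dvd_of_dvd_mul_right ⟨sigma1 b, by rw [h, mul_comm]⟩
  have b_dvd : b ∣ sigma1 b := hab.symm.dvd_of_dvd_mul_right ⟨sigma1 a, by rw [← h, mul_comm]⟩
  have sigma1_one : sigma1 1 = 1 := by simp [sigma1]
  have sigma1_six : sigma1 6 = 12 := by decide +kernel
  rcases eq_one_or_eq_six_of_dvd_sigma1 ha a_dvd with rfl | rfl <;>
    rcases eq_one_or_eq_six_of_dvd_sigma1 hb b_dvd with rfl | rfl <;>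
    simp_all

theorem eq_of_s_mul_eq {a b : ℕ} (ha : Squarefree a) (hb : Squarefree b)
    (h : s a * b = s b * a) : a = b := by
  have sigma1_mul_eq : sigma1 a * b = sigma1 b * a := by
    rw [← s_add_self, ← s_add_self]
    linarith
  obtain ⟨a', b', hcop, ha_eq, hb_eq⟩ := Nat.exists_coprime a b
  generalize a.gcd b = g at ha_eq hb_eq
  subst ha_eq hb_eq
  rw [sigma1_mul (Nat.coprime_of_squarefree_mul ha),
    sigma1_mul (Nat.coprime_of_squarefree_mul hb)] at sigma1_mul_eq
  have hg : g ≠ 0 := right_ne_zero_of_mul ha.ne_zero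
  rw [eq_of_coprime_of_sigma1_mul_eq hcop ha.of_mul_left hb.of_mul_left]
  exact Nat.eq_of_mul_eq_mul_left (Nat.mul_pos (sigma1_pos hg) (Nat.pos_of_ne_zero hg))
    (by linarith)

lemma exists_eq_mul_squarefree_coprime {n T : ℕ} (hn : n ≠ 0) (h : ∀ b, T < b → ¬ b ^ 2 ∣ n) :
    ∃ u v, n = u * v ∧ Squarefree u ∧ u.Coprime v ∧ v ≤ T ^ 3 := by
  obtain ⟨a, b, rfl, ha⟩ := Nat.sq_mul_squarefree n
  have hb0 : b ≠ 0 := fun hb ↦ hn (by simp [hb])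
  have hbT : b ≤ T := not_lt.1 fun hb ↦ h b hb (dvd_mul_right _ _)
  have hgb : a.gcd b ≤ b := Nat.gcd_le_right _ (Nat.pos_of_ne_zero hb0)
  obtain ⟨u, hu⟩ := a.gcd_dvd_left b
  have gcd_coprime : (a.gcd b).Coprime u := Nat.coprime_of_squarefree_mul (hu ▸ ha)
  have coprime_b : u.Coprime b := by
    have : u.gcd b ∣ a.gcd b := Nat.gcd_dvd_gcd_of_dvd_left b ⟨_, hu.trans (mul_comm _ _)⟩
    exact Nat.eq_one_of_dvd_coprimes gcd_coprime this (u.gcd_dvd_left b)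
  refine ⟨u, b ^ 2 * a.gcd b, ?_, ha.squarefree_of_dvd ⟨_, hu.trans (mul_comm _ _)⟩,
    (coprime_b.pow_right 2).mul_right gcd_coprime.symm, ?_⟩
  · conv_lhs => rw [hu]
    ring
  · calc b ^ 2 * a.gcd b ≤ T ^ 2 * T := by gcongr; exact hgb.trans hbT
      _ = T ^ 3 := by ring

/-- `a` is primitive for the lower bound `A`: it exceeds `A`, and no proper divisor of it does. -/
def PrimitiveAbove (A a : ℕ) : Prop := A < a ∧ ∀ d ∈ a.properDivisors, d ≤ A

lemma exists_primitiveAbove_dvd {u A : ℕ} (hu : A < u) : ∃ a, a ∣ u ∧ PrimitiveAbove A a := by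
  have hex : ∃ a, a ∣ u ∧ A < a := ⟨u, dvd_rfl, hu⟩
  obtain ⟨hdvd, hlt⟩ := Nat.find_spec hex
  refine ⟨Nat.find hex, hdvd, hlt, fun d hd ↦ ?_⟩
  obtain ⟨hda, hd_lt⟩ := Nat.mem_properDivisors.1 hd
  exact not_lt.1 fun hAd ↦ Nat.find_min hex hd_lt ⟨hda.trans hdvd, hAd⟩

lemma PrimitiveAbove.prime_or_le_sq {a A : ℕ} (ha : PrimitiveAbove A a) (hA : A ≠ 0) :
    a.Prime ∨ a ≤ A ^ 2 := by
  obtain ⟨hlt, hproper⟩ := ha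
  refine or_iff_not_imp_left.2 fun ha ↦ ?_
  obtain ⟨c, ⟨e, rfl⟩, hc, hce⟩ := Nat.exists_dvd_of_not_prime2 (by omega) ha
  have he_lt : e < c * e := by
    have : e ≠ 0 := by rintro rfl; omega
    nlinarith [Nat.pos_of_ne_zero this]
  rw [sq]
  exact Nat.mul_le_mul (hproper c (Nat.mem_properDivisors.2 ⟨dvd_mul_right _ _, hce⟩))
    (hproper e (Nat.mem_properDivisors.2 ⟨dvd_mul_left _ _, he_lt⟩))

end SigmaAndS

/-! ### Divisibility of `s n` by a prime power -/

section PrimePowerDvd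

variable {p e : ℕ}

lemma modEq_of_pow_dvd_s_mul_prime (hp : p.Prime) (he : e ≠ 0) {m q r : ℕ} (hm : ¬ p ^ 2 ∣ m)
    (hq : q.Prime) (hr : r.Prime) (hqm : ¬ q ∣ m) (hrm : ¬ r ∣ m)
    (hsq : p ^ (e + 1) ∣ s (m * q)) (hsr : p ^ (e + 1) ∣ s (m * r)) : q ≡ r [MOD p ^ e] := by
  have hpZ : Prime (p : ℤ) := Nat.prime_iff_prime_int.1 hp
  rw [s_mul_prime hq hqm] at hsq
  rw [s_mul_prime hr hrm] at hsr
  have sq_not_dvd : ¬ p ^ 2 ∣ s m := fun hd ↦ by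
    have sq_dvd_sigma1 : p ^ 2 ∣ sigma1 m := (Nat.dvd_add_right (hd.mul_right q)).1
      ((pow_dvd_pow p (by omega)).trans hsq)
    rw [← s_add_self] at sq_dvd_sigma1
    exact hm ((Nat.dvd_add_right hd).1 sq_dvd_sigma1)
  have dvd_mul_sub : (p : ℤ) ^ (e + 1) ∣ s m * ((r : ℤ) - q) := by
    have := dvd_sub (Int.natCast_dvd_natCast.2 hsr) (Int.natCast_dvd_natCast.2 hsq)
    push_cast at this
    rwa [add_sub_add_right_eq_sub, ← mul_sub] at this
  rw [Nat.modEq_iff_dvd]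
  push_cast
  by_cases hd : p ∣ s m
  · obtain ⟨c, hc⟩ := hd
    have hpc : ¬ (p : ℤ) ∣ c := fun hd ↦ sq_not_dvd <| by
      rw [hc, sq]
      exact mul_dvd_mul_left p (mod_cast hd)
    rw [hc, Nat.cast_mul, mul_assoc, pow_succ',
      mul_dvd_mul_iff_left (mod_cast hp.ne_zero)] at dvd_mul_sub
    exact hpZ.pow_dvd_of_dvd_mul_left e hpc dvd_mul_sub
  · exact (pow_dvd_pow _ e.le_succ).trans
      (hpZ.pow_dvd_of_dvd_mul_left (e + 1) (mod_cast hd) dvd_mul_sub)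

lemma s_mul_modEq_of_pow_dvd (hp : p.Prime) (he : e ≠ 0) {a a' b : ℕ} (hba : b.Coprime a)
    (hba' : b.Coprime a') (hpn : ¬ p ∣ b * a) (hs : p ^ e ∣ s (b * a))
    (hs' : p ^ e ∣ s (b * a')) : s a * a' ≡ s a' * a [MOD p ^ e] := by
  have hpZ : Prime (p : ℤ) := Nat.prime_iff_prime_int.1 hp
  have cast_s (n : ℕ) : (s n : ℤ) = sigma1 n - n := by simp [← s_add_self]
  have hpb : ¬ p ∣ sigma1 b := fun hd ↦ by
    have : p ∣ sigma1 (b * a) := sigma1_mul hba ▸ hd.mul_right _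
    rw [← s_add_self] at this
    exact hpn ((Nat.dvd_add_right ((dvd_pow_self p he).trans hs)).1 this)
  have hZ : (p : ℤ) ^ e ∣ sigma1 b * sigma1 a - b * a := by
    simpa [cast_s, sigma1_mul hba] using Int.natCast_dvd_natCast.2 hs
  have hZ' : (p : ℤ) ^ e ∣ sigma1 b * sigma1 a' - b * a' := by
    simpa [cast_s, sigma1_mul hba'] using Int.natCast_dvd_natCast.2 hs'
  rw [Nat.modEq_iff_dvd]
  push_cast
  refine hpZ.pow_dvd_of_dvd_mul_left e (a := (sigma1 b : ℤ)) (mod_cast hpb) ?_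
  simp only [cast_s]
  convert dvd_sub (hZ'.mul_right (a : ℤ)) (hZ.mul_right (a' : ℤ)) using 1
  ring

lemma eq_of_pow_dvd_s_mul (hp : p.Prime) (he : e ≠ 0) {A K : ℕ} (hA : K * A ^ 3 < p ^ e)
    {a a' b : ℕ} (hb : b ≠ 0) (ha : Squarefree a) (ha' : Squarefree a') (hba : b.Coprime a)
    (hba' : b.Coprime a') (hpn : ¬ p ∣ b * a) (hK : #(b * a).divisors ≤ K)
    (hK' : #(b * a').divisors ≤ K) (ha_le : a ≤ A ^ 2) (ha_le' : a' ≤ A ^ 2)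
    (ha_proper : ∀ d ∈ a.properDivisors, d ≤ A) (ha_proper' : ∀ d ∈ a'.properDivisors, d ≤ A)
    (hs : p ^ e ∣ s (b * a)) (hs' : p ^ e ∣ s (b * a')) : a = a' := by
  have s_mul_lt {c c' : ℕ} (hc : c ≠ 0) (hcK : #(b * c).divisors ≤ K) (hc_le' : c' ≤ A ^ 2)
      (hc_proper : ∀ d ∈ c.properDivisors, d ≤ A) : s c * c' < p ^ e := by
    have card_le : #c.divisors ≤ K :=
      (card_le_card (Nat.divisors_subset_of_dvd (mul_ne_zero hb hc) (dvd_mul_left c b))).trans hcK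
    calc s c * c' ≤ K * A * A ^ 2 := by
          gcongr
          exact (s_le_card_divisors_mul hc_proper).trans (Nat.mul_le_mul_right _ card_le)
      _ = K * A ^ 3 := by ring
      _ < p ^ e := hA
  exact eq_of_s_mul_eq ha ha' <| (s_mul_modEq_of_pow_dvd hp he hba hba' hpn hs hs').eq_of_lt_of_lt
    (s_mul_lt ha.ne_zero hK ha_le' ha_proper) (s_mul_lt ha'.ne_zero hK' ha_le ha_proper')

end PrimePowerDvd

/-! ### Counting integers with a given type of divisor -/

/-- `d` is a unitary divisor of `n`: it is coprime to its cofactor `n / d`. The cofactor is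
quantified to avoid the division. -/
def UnitaryDvd (d n : ℕ) : Prop := ∃ c, c.Coprime d ∧ n = c * d

section UnitaryDvd

variable {d m n : ℕ}

lemma UnitaryDvd.dvd (h : UnitaryDvd d n) : d ∣ n := by
  obtain ⟨c, -, rfl⟩ := h
  exact dvd_mul_left d c

lemma UnitaryDvd.trans (hdm : UnitaryDvd d m) (hmn : UnitaryDvd m n) : UnitaryDvd d n := by
  obtain ⟨c, hc, rfl⟩ := hdm
  obtain ⟨b, hb, rfl⟩ := hmn
  exact ⟨b * c, (hb.coprime_dvd_right (dvd_mul_left d c)).mul_left hc, (mul_assoc b c d).symm⟩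

lemma UnitaryDvd.coprime_of_mul (hd : d ≠ 0) (h : UnitaryDvd d (m * d)) : m.Coprime d := by
  obtain ⟨c, hc, h⟩ := h
  rwa [Nat.eq_of_mul_eq_mul_right (Nat.pos_of_ne_zero hd) h]

lemma unitaryDvd_of_squarefree (hn : Squarefree n) (hd : d ∣ n) : UnitaryDvd d n := by
  obtain ⟨c, rfl⟩ := hd
  exact ⟨c, (Nat.coprime_of_squarefree_mul hn).symm, mul_comm d c⟩

lemma unitaryDvd_of_prime (hd : d.Prime) (hdn : d ∣ n) (hsq : ¬ d ^ 2 ∣ n) : UnitaryDvd d n := by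
  obtain ⟨c, rfl⟩ := hdn
  refine ⟨c, (hd.coprime_iff_not_dvd.2 fun hc ↦ hsq ?_).symm, mul_comm d c⟩
  rw [sq]
  exact mul_dvd_mul_left d hc

end UnitaryDvd

section Divisors

variable {N : ℕ}

lemma sum_Icc_one_div_eq_harmonic (N : ℕ) : ∑ m ∈ Icc 1 N, (1 : ℝ) / m = harmonic N := by
  simp [harmonic_eq_sum_Icc]

lemma harmonic_le_one_add_of_le_two_pow {l : ℕ} (h : N ≤ 2 ^ l) : (harmonic N : ℝ) ≤ 1 + l := by
  refine (harmonic_le_one_add_log N).trans (add_le_add_right ?_ 1)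
  obtain rfl | hN := eq_or_ne N 0
  · simp
  calc Real.log N ≤ Real.log ((2 : ℝ) ^ l) :=
        Real.log_le_log (by positivity) (mod_cast h)
    _ = l * Real.log 2 := Real.log_pow 2 l
    _ ≤ l * 1 := by gcongr; linarith [Real.log_two_lt_d9]
    _ = l := mul_one _

lemma countUpTo_mul_lt_le {l : ℕ} (hl : l ≠ 0) : countUpTo N (fun n ↦ n * l < N) ≤ N / l := by
  refine le_trans (Nat.cast_le.2 ?_) Nat.cast_div_le
  refine (card_le_card fun n hn ↦ ?_).trans (Nat.card_Icc 1 (N / l)).le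
  simp only [mem_filter, mem_Icc, Nat.le_div_iff_mul_le (Nat.pos_of_ne_zero hl)] at hn ⊢
  exact ⟨hn.1.1, hn.2.le⟩

lemma countUpTo_le_card_divisors_mul_le (K : ℝ) :
    countUpTo N (fun n ↦ K ≤ #n.divisors) * K ≤ N * harmonic N := by
  refine (countUpTo_mul_le_sum (fun _ ↦ Nat.cast_nonneg _) fun _ _ _ h ↦ h).trans ?_
  have : ∑ n ∈ Ioc 0 N, #n.divisors = ∑ t ∈ Ioc 0 N, N / t := by
    simpa [ArithmeticFunction.sigma_zero_apply] using
      ArithmeticFunction.sum_Ioc_sigma0_eq_sum_div N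
  rw [← Nat.cast_sum, show Icc 1 N = Ioc 0 N from rfl, this, ← sum_Icc_one_div_eq_harmonic,
    mul_sum, Nat.cast_sum]
  refine sum_le_sum fun t _ ↦ ?_
  rw [mul_one_div]
  exact Nat.cast_div_le

lemma countUpTo_exists_dvd_le {A : ℕ} (hA : A ≠ 0) (P : ℕ → ℕ → Prop) :
    countUpTo N (fun n ↦ ∃ d, d ∣ n ∧ A < d ∧ P d n) ≤
      ∑ m ∈ Icc 1 (N / A), (#{d ∈ Ioc A (N / m) | P d (m * d)} : ℝ) := by
  unfold countUpTo
  rw [← Nat.cast_sum, Nat.cast_le]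
  have maps : {n ∈ Icc 1 N | ∃ d, d ∣ n ∧ A < d ∧ P d n} ⊆ (Icc 1 (N / A)).biUnion fun m ↦
      {d ∈ Ioc A (N / m) | P d (m * d)}.image (m * ·) := by
    intro n hn
    simp only [mem_filter, mem_Icc] at hn
    obtain ⟨⟨hn1, hnN⟩, d, ⟨m, rfl⟩, hAd, hP⟩ := hn
    have hm : 0 < m := Nat.pos_of_mul_pos_left hn1
    rw [mul_comm d m] at hnN hP
    simp only [mem_biUnion, mem_image, mem_filter, mem_Icc, mem_Ioc,
      Nat.le_div_iff_mul_le (Nat.pos_of_ne_zero hA)]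
    have hdm : d ≤ N / m := (Nat.le_div_iff_mul_le hm).2 (mul_comm m d ▸ hnN)
    exact ⟨m, ⟨hm, (Nat.mul_le_mul_left m hAd.le).trans hnN⟩, d, ⟨⟨hAd, hdm⟩, hP⟩, mul_comm m d⟩
  exact (card_le_card maps).trans (card_biUnion_le.trans (sum_le_sum fun m _ ↦ card_image_le))

lemma sum_Icc_min_div_le (N Z : ℕ) :
    ∑ m ∈ Icc 1 N, ((min Z (N / m) : ℕ) : ℝ) ≤ N * harmonic Z := by
  have count_pairs : ∑ m ∈ Icc 1 N, min Z (N / m) ≤ ∑ t ∈ Icc 1 Z, N / t := by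
    calc ∑ m ∈ Icc 1 N, min Z (N / m) = ∑ m ∈ Icc 1 N, #{t ∈ Icc 1 Z | t * m ≤ N} := by
          refine sum_congr rfl fun m hm ↦ ?_
          rw [← Nat.add_sub_cancel (n := min Z (N / m)) (m := 1), ← Nat.card_Icc]
          congr 1
          ext t
          simp [Nat.le_div_iff_mul_le (mem_Icc.1 hm).1, and_assoc]
      _ = ∑ t ∈ Icc 1 Z, #{m ∈ Icc 1 N | t * m ≤ N} :=
          sum_card_bipartiteAbove_eq_sum_card_bipartiteBelow _
      _ ≤ ∑ t ∈ Icc 1 Z, N / t := by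
          refine sum_le_sum fun t ht ↦ ?_
          refine (card_le_card fun m hm ↦ ?_).trans (Nat.card_Icc 1 (N / t)).le
          simp only [mem_filter, mem_Icc] at hm
          rw [mem_Icc, Nat.le_div_iff_mul_le (mem_Icc.1 ht).1, mul_comm]
          exact ⟨hm.1.1, hm.2⟩
  calc ∑ m ∈ Icc 1 N, ((min Z (N / m) : ℕ) : ℝ) ≤ ∑ t ∈ Icc 1 Z, ((N / t : ℕ) : ℝ) :=
        mod_cast count_pairs
    _ ≤ ∑ t ∈ Icc 1 Z, N * (1 / t : ℝ) :=
        sum_le_sum fun t _ ↦ by rw [mul_one_div]; exact Nat.cast_div_le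
    _ = N * harmonic Z := by rw [← mul_sum, sum_Icc_one_div_eq_harmonic]

lemma countUpTo_exists_dvd_succ_mul_dvd_le {p : ℕ} (hp : 2 ≤ p) (N : ℕ) :
    countUpTo N (fun n ↦ ∃ q, p ∣ q + 1 ∧ p * q ∣ n) ≤
      2 * N * harmonic N / (p : ℝ) ^ 2 := by
  have hp2 : (2 : ℝ) ≤ p := mod_cast hp
  calc countUpTo N (fun n ↦ ∃ q, p ∣ q + 1 ∧ p * q ∣ n)
      ≤ countUpTo N (fun n ↦ ∃ j ∈ Icc 1 N, p * (p * j - 1) ∣ n) := by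
        refine countUpTo_mono ?_
        rintro n hn1 hnN ⟨q, ⟨j, hj⟩, hdvd⟩
        have hqN : q ≤ N := (Nat.le_of_dvd hn1 ((dvd_mul_left q p).trans hdvd)).trans hnN
        have hj0 : 0 < j := Nat.pos_of_ne_zero fun h ↦ by simp [h] at hj
        refine ⟨j, mem_Icc.2 ⟨hj0, by nlinarith⟩, ?_⟩
        rwa [← hj, Nat.add_sub_cancel]
    _ ≤ ∑ j ∈ Icc 1 N, 2 * N / (p : ℝ) ^ 2 * (1 / j) := by
        refine (countUpTo_exists_le _ _).trans (sum_le_sum fun j hj ↦ ?_)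
        have hj1 : (1 : ℝ) ≤ j := mod_cast (mem_Icc.1 hj).1
        have hpj : 1 ≤ p * j := Nat.mul_pos (by omega) (mem_Icc.1 hj).1
        have half_le : (p : ℝ) * j / 2 ≤ p * j - 1 := by nlinarith
        calc countUpTo N (fun n ↦ p * (p * j - 1) ∣ n) ≤ N / (p * (p * j - 1) : ℕ) :=
              countUpTo_dvd_le _ _
          _ = N / (p * (p * j - 1)) := by push_cast [hpj]; rfl
          _ ≤ N / (p * (p * j / 2)) := by gcongr
          _ = 2 * N / (p : ℝ) ^ 2 * (1 / j) := by field_simp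
    _ = 2 * N * harmonic N / (p : ℝ) ^ 2 := by
        rw [← mul_sum, sum_Icc_one_div_eq_harmonic]
        ring

end Divisors

/-! ### Bad primes -/

/-- The event at a prime `p` that has to be shown rare: `p ^ 4` divides `s n`, although not even
`p ^ 2` divides `n`. -/
def BadAt (p n : ℕ) : Prop := p ^ 4 ∣ s n ∧ ¬ p ^ 2 ∣ n

lemma exists_badAt_of_not_kfree_iff {k n T q : ℕ} (hk : 4 ≤ k) (hsq : ∀ b, T < b → ¬ b ^ 2 ∣ n)
    (hq : q.Prime) (hTq : T < q) (hT : T.factorial ^ k ∣ q + 1) (hqn : q ∣ n)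
    (hn : ¬ (KFree k n ↔ KFree k (s n))) : ∃ p, p.Prime ∧ T < p ∧ BadAt p n := by
  by_contra! hgood
  refine hn (forall₂_congr fun p hp ↦ not_congr ?_)
  by_cases hpT : p ≤ T
  · have hsigma : p ^ k ∣ sigma1 n := by
      obtain ⟨c, hc, rfl⟩ := unitaryDvd_of_prime hq hqn (hsq q hTq)
      rw [sigma1_mul hc, sigma1_prime hq]
      exact ((pow_dvd_pow_of_dvd (hp.dvd_factorial.2 hpT) k).trans hT).mul_left _
    rw [← s_add_self] at hsigma
    exact ⟨fun h ↦ (Nat.dvd_add_left h).1 hsigma, fun h ↦ (Nat.dvd_add_right h).1 hsigma⟩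
  · have hpn : ¬ p ^ 2 ∣ n := hsq p (not_le.1 hpT)
    exact iff_of_false (fun h ↦ hpn ((pow_dvd_pow p (by omega)).trans h))
      fun h ↦ hgood p hp (not_le.1 hpT) ⟨(pow_dvd_pow p hk).trans h, hpn⟩

section BadAt

variable {p : ℕ}

lemma card_le_of_modEq {F : Finset ℕ} {X d : ℕ} (hX : ∀ q ∈ F, q ≤ X)
    (hd : ∀ q ∈ F, ∀ r ∈ F, q ≡ r [MOD d]) : #F ≤ X / d + 1 := by
  rw [← card_range (X / d + 1)]
  refine card_le_card_of_injOn (· / d)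
    (fun q hq ↦ by simpa [Nat.lt_succ_iff] using Nat.div_le_div_right (hX q hq)) ?_
  intro q hq r hr (hqr : q / d = r / d)
  rw [← Nat.div_add_mod q d, ← Nat.div_add_mod r d, hqr, hd q hq r hr]

lemma card_le_of_badAt_mul (hp : p.Prime) {F : Finset ℕ} {m X : ℕ} (hX : ∀ q ∈ F, q ≤ X)
    (hF : ∀ q ∈ F, q.Prime ∧ UnitaryDvd q (m * q) ∧ BadAt p (m * q)) :
    #F ≤ X / (p : ℝ) ^ 3 + 1 := by
  have not_dvd {q : ℕ} (hq : q ∈ F) : ¬ q ∣ m :=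
    (hF q hq).1.coprime_iff_not_dvd.1 ((hF q hq).2.1.coprime_of_mul (hF q hq).1.ne_zero).symm
  have card_le : #F ≤ X / p ^ 3 + 1 := card_le_of_modEq hX fun q hq r hr ↦
    modEq_of_pow_dvd_s_mul_prime hp three_ne_zero (fun h ↦ (hF q hq).2.2.2 (h.mul_right q))
      (hF q hq).1 (hF r hr).1 (not_dvd hq) (not_dvd hr) (hF q hq).2.2.1 (hF r hr).2.2.1
  calc (#F : ℝ) ≤ (X / p ^ 3 : ℕ) + 1 := mod_cast card_le
    _ ≤ X / (p : ℝ) ^ 3 + 1 := by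
        gcongr
        exact_mod_cast Nat.cast_div_le (α := ℝ) (m := X) (n := p ^ 3)

lemma card_le_of_badAt_mul_of_lt (hp : p.Prime) {F : Finset ℕ} {m X : ℕ} (hX : ∀ q ∈ F, q ≤ X)
    (hF : ∀ q ∈ F, q.Prime ∧ UnitaryDvd q (m * q) ∧ BadAt p (m * q)) (hpF : ∀ q ∈ F, p ^ 3 < q) :
    #F ≤ X * (2 / (p : ℝ) ^ 3) := by
  have hp0 := hp.pos
  obtain rfl | ⟨q, hq⟩ := F.eq_empty_or_nonempty
  · simp only [card_empty, Nat.cast_zero]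
    positivity
  have one_le : 1 ≤ X / (p : ℝ) ^ 3 := by
    rw [one_le_div (by positivity)]
    exact_mod_cast (hpF q hq).le.trans (hX q hq)
  calc (#F : ℝ) ≤ X / (p : ℝ) ^ 3 + 1 := card_le_of_badAt_mul hp hX hF
    _ ≤ X / (p : ℝ) ^ 3 + X / (p : ℝ) ^ 3 := by gcongr
    _ = X * (2 / (p : ℝ) ^ 3) := by ring

lemma countUpTo_badAt_unitaryDvd_le_of_le (hp : p.Prime) (N Z : ℕ) :
    countUpTo N (fun n ↦ BadAt p n ∧ ∃ q, q.Prime ∧ UnitaryDvd q n ∧ p ^ 3 < q ∧ q ≤ Z) ≤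
      N * harmonic Z * (2 / (p : ℝ) ^ 3) := by
  have hp0 := hp.pos
  calc countUpTo N (fun n ↦ BadAt p n ∧ ∃ q, q.Prime ∧ UnitaryDvd q n ∧ p ^ 3 < q ∧ q ≤ Z)
      ≤ countUpTo N (fun n ↦ ∃ q, q ∣ n ∧ p ^ 3 < q ∧
          q ≤ Z ∧ q.Prime ∧ UnitaryDvd q n ∧ BadAt p n) :=
        countUpTo_mono fun n _ _ ⟨hbad, q, hq, hqn, hpq, hqZ⟩ ↦
          ⟨q, hqn.dvd, hpq, hqZ, hq, hqn, hbad⟩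
    _ ≤ ∑ m ∈ Icc 1 (N / p ^ 3), (min Z (N / m) : ℕ) * (2 / (p : ℝ) ^ 3) := by
        refine (countUpTo_exists_dvd_le (by positivity) _).trans (sum_le_sum fun m _ ↦ ?_)
        refine card_le_of_badAt_mul_of_lt (m := m) hp ?_ ?_ ?_ <;>
          simp only [mem_filter, mem_Ioc, le_min_iff] <;> tauto
    _ ≤ ∑ m ∈ Icc 1 N, (min Z (N / m) : ℕ) * (2 / (p : ℝ) ^ 3) :=
        sum_le_sum_of_subset_of_nonneg (Icc_subset_Icc_right (Nat.div_le_self _ _))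
          fun _ _ _ ↦ by positivity
    _ ≤ N * harmonic Z * (2 / (p : ℝ) ^ 3) := by
        rw [← sum_mul]
        gcongr
        exact sum_Icc_min_div_le N Z

lemma countUpTo_badAt_unitaryDvd_le (hp : p.Prime) {A : ℕ} (hA : A ≠ 0) (N : ℕ) :
    countUpTo N (fun n ↦ BadAt p n ∧ ∃ q, q.Prime ∧ UnitaryDvd q n ∧ A < q) ≤
      N / A + N * harmonic N / (p : ℝ) ^ 3 := by
  calc countUpTo N (fun n ↦ BadAt p n ∧ ∃ q, q.Prime ∧ UnitaryDvd q n ∧ A < q)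
      ≤ countUpTo N (fun n ↦ ∃ q, q ∣ n ∧ A < q ∧ q.Prime ∧ UnitaryDvd q n ∧ BadAt p n) :=
        countUpTo_mono fun n _ _ ⟨hbad, q, hq, hqn, hAq⟩ ↦ ⟨q, hqn.dvd, hAq, hq, hqn, hbad⟩
    _ ≤ ∑ m ∈ Icc 1 (N / A), ((N / m : ℕ) / (p : ℝ) ^ 3 + 1) := by
        refine (countUpTo_exists_dvd_le hA _).trans (sum_le_sum fun m _ ↦ ?_)
        refine card_le_of_badAt_mul (m := m) hp ?_ ?_ <;>
          simp only [mem_filter, mem_Ioc] <;> tauto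
    _ = (N / A : ℕ) + (∑ m ∈ Icc 1 (N / A), ((N / m : ℕ) : ℝ)) / (p : ℝ) ^ 3 := by
        rw [sum_add_distrib, sum_div, add_comm]
        simp
    _ ≤ N / A + N * harmonic N / (p : ℝ) ^ 3 := by
        gcongr
        · exact Nat.cast_div_le
        rw [← sum_Icc_one_div_eq_harmonic, mul_sum]
        refine (sum_le_sum_of_subset_of_nonneg (Icc_subset_Icc_right (Nat.div_le_self N A))
          fun _ _ _ ↦ by positivity).trans (sum_le_sum fun m _ ↦ ?_)
        rw [mul_one_div]
        exact Nat.cast_div_le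

lemma countUpTo_badAt_primitiveAbove_le (hp : p.Prime) {A K : ℕ} (hA : A ≠ 0)
    (hK : K * A ^ 3 < p ^ 4) (N : ℕ) :
    countUpTo N (fun n ↦ BadAt p n ∧ ¬ p ∣ n ∧ #n.divisors ≤ K ∧
      ∃ a, Squarefree a ∧ UnitaryDvd a n ∧ PrimitiveAbove A a ∧ a ≤ A ^ 2) ≤ N / A := by
  calc countUpTo N (fun n ↦ BadAt p n ∧ ¬ p ∣ n ∧ #n.divisors ≤ K ∧
        ∃ a, Squarefree a ∧ UnitaryDvd a n ∧ PrimitiveAbove A a ∧ a ≤ A ^ 2)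
      ≤ countUpTo N (fun n ↦ ∃ a, a ∣ n ∧ A < a ∧ BadAt p n ∧ ¬ p ∣ n ∧ #n.divisors ≤ K ∧
          Squarefree a ∧ UnitaryDvd a n ∧ PrimitiveAbove A a ∧ a ≤ A ^ 2) :=
        countUpTo_mono fun n _ _ ⟨hbad, hpn, hcard, a, ha, han, hprim, hle⟩ ↦
          ⟨a, han.dvd, hprim.1, hbad, hpn, hcard, ha, han, hprim, hle⟩
    _ ≤ ∑ _ ∈ Icc 1 (N / A), (1 : ℝ) := by
        refine (countUpTo_exists_dvd_le hA _).trans (sum_le_sum fun m hm ↦ ?_)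
        refine Nat.cast_le_one.2 (card_le_one.2 fun a ha a' ha' ↦ ?_)
        simp only [mem_filter] at ha ha'
        obtain ⟨-, hbad, hpn, hcard, hsf, han, hprim, hle⟩ := ha
        obtain ⟨-, hbad', -, hcard', hsf', han', hprim', hle'⟩ := ha'
        exact eq_of_pow_dvd_s_mul hp four_ne_zero hK (Nat.one_le_iff_ne_zero.1 (mem_Icc.1 hm).1)
          hsf hsf' (han.coprime_of_mul hsf.ne_zero) (han'.coprime_of_mul hsf'.ne_zero) hpn hcard
          hcard' hle hle' hprim.2 hprim'.2 hbad.1 hbad'.1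
    _ ≤ N / A := by
        simpa using Nat.cast_div_le (α := ℝ) (m := N) (n := A)

end BadAt

/-! ### Large bad primes -/

section LargePrimes

variable {n N T l p : ℕ}

lemma exists_dvd_succ_mul_dvd (hn : n ≠ 0) (hsq : ∀ b, T < b → ¬ b ^ 2 ∣ n)
    (hp : p.Prime) (hT : T ^ 6 < p) (hbad : BadAt p n) (hpn : p ∣ n) :
    ∃ q, p ∣ q + 1 ∧ p * q ∣ n := by
  obtain ⟨u, v, rfl, hu, huv, hvT⟩ := exists_eq_mul_squarefree_coprime hn hsq
  have dvd_sigma1 : p ∣ sigma1 u * sigma1 v := by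
    rw [← sigma1_mul huv, ← s_add_self]
    exact dvd_add ((dvd_pow_self p four_ne_zero).trans hbad.1) hpn
  have not_dvd_sigma1 : ¬ p ∣ sigma1 v := fun hdvd ↦ by
    have : p ≤ T ^ 6 :=
      calc p ≤ sigma1 v := Nat.le_of_dvd (sigma1_pos (right_ne_zero_of_mul hn)) hdvd
        _ ≤ v ^ 2 := sigma1_le_sq v
        _ ≤ (T ^ 3) ^ 2 := by gcongr
        _ = T ^ 6 := by ring
    omega
  obtain ⟨q, hq, hqu, hpq⟩ := exists_prime_dvd_succ_of_dvd_sigma1 hu hp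
    ((hp.dvd_mul.1 dvd_sigma1).resolve_right not_dvd_sigma1)
  have hne : p ≠ q := by
    rintro rfl
    exact hp.not_dvd_one ((Nat.dvd_add_right dvd_rfl).1 hpq)
  exact ⟨q, hpq, ((Nat.coprime_primes hp hq).2 hne).mul_dvd_of_dvd_of_dvd hpn
    (hqu.mul_right v)⟩

lemma exists_unitaryDvd_primitiveAbove {A : ℕ} (hsq : ∀ b, T < b → ¬ b ^ 2 ∣ n)
    (hA : A * T ^ 3 < n) : ∃ a, Squarefree a ∧ UnitaryDvd a n ∧ PrimitiveAbove A a := by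
  obtain ⟨u, v, rfl, hu, huv, hvT⟩ := exists_eq_mul_squarefree_coprime (by omega) hsq
  have hAu : A < u := by
    by_contra! huA
    exact absurd (Nat.mul_le_mul huA hvT) (not_le.2 hA)
  obtain ⟨a, hau, ha⟩ := exists_primitiveAbove_dvd hAu
  exact ⟨a, hu.squarefree_of_dvd hau,
    (unitaryDvd_of_squarefree hu hau).trans ⟨v, huv.symm, mul_comm u v⟩, ha⟩

lemma countUpTo_badAt_le (hp : p.Prime) {A K : ℕ} (hA : A ≠ 0) (hK : K * A ^ 3 < p ^ 4)
    (hT : T ^ 6 < p) (N : ℕ) :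
    countUpTo N (fun n ↦ BadAt p n ∧ #n.divisors ≤ K ∧ A * T ^ 3 < n ∧
      ∀ b, T < b → ¬ b ^ 2 ∣ n) ≤ 2 * (N / A) + 3 * N * harmonic N / (p : ℝ) ^ 2 := by
  have hp1 : (1 : ℝ) ≤ p := mod_cast hp.one_le
  have harmonic_nonneg : (0 : ℝ) ≤ harmonic N := by
    rw [← sum_Icc_one_div_eq_harmonic]
    positivity
  calc countUpTo N (fun n ↦ BadAt p n ∧ #n.divisors ≤ K ∧ A * T ^ 3 < n ∧
        ∀ b, T < b → ¬ b ^ 2 ∣ n)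
      ≤ countUpTo N (fun n ↦ (∃ q, p ∣ q + 1 ∧ p * q ∣ n) ∨
          (BadAt p n ∧ ∃ q, q.Prime ∧ UnitaryDvd q n ∧ A < q) ∨
          (BadAt p n ∧ ¬ p ∣ n ∧ #n.divisors ≤ K ∧
            ∃ a, Squarefree a ∧ UnitaryDvd a n ∧ PrimitiveAbove A a ∧ a ≤ A ^ 2)) := by
        refine countUpTo_mono fun n hn _ ⟨hbad, hcard, hAn, hsq⟩ ↦ ?_
        by_cases hpn : p ∣ n
        · exact .inl (exists_dvd_succ_mul_dvd (by omega) hsq hp hT hbad hpn)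
        obtain ⟨a, ha, han, hprim⟩ := exists_unitaryDvd_primitiveAbove hsq hAn
        obtain hap | hle := hprim.prime_or_le_sq hA
        · exact .inr (.inl ⟨hbad, a, hap, han, hprim.1⟩)
        · exact .inr (.inr ⟨hbad, hpn, hcard, a, ha, han, hprim, hle⟩)
    _ ≤ 2 * N * harmonic N / (p : ℝ) ^ 2 + ((N / A + N * harmonic N / (p : ℝ) ^ 3) + N / A) :=
        (countUpTo_or_le _ _).trans <|
          add_le_add (countUpTo_exists_dvd_succ_mul_dvd_le hp.two_le N) <|
            (countUpTo_or_le _ _).trans <| add_le_add (countUpTo_badAt_unitaryDvd_le hp hA N)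
              (countUpTo_badAt_primitiveAbove_le hp hA hK N)
    _ ≤ 2 * N * harmonic N / (p : ℝ) ^ 2 + ((N / A + N * harmonic N / (p : ℝ) ^ 2) + N / A) := by
        gcongr
        norm_num
    _ = 2 * (N / A) + 3 * N * harmonic N / (p : ℝ) ^ 2 := by ring

lemma BadAt.pow_four_le (hbad : BadAt p n) (hlN : l < N) (hnN : n ≤ N) (hln : N ≤ n * l)
    (hcard : #n.divisors ≤ l ^ 2) : p ^ 4 ≤ l ^ 2 * N := by
  have hn : 1 < n := by
    by_contra! hle
    nlinarith
  calc p ^ 4 ≤ s n := Nat.le_of_dvd (s_pos hn) hbad.1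
    _ ≤ #n.divisors * n := s_le_card_divisors_mul fun _ hd ↦ (Nat.mem_properDivisors.1 hd).2.le
    _ ≤ l ^ 2 * N := Nat.mul_le_mul hcard hnN

lemma sum_one_div_sq_le_of_lt {J : Finset ℕ} {D : ℕ} (hD : D ≠ 0) (hJ : ∀ p ∈ J, D < p) :
    ∑ p ∈ J, (1 : ℝ) / (p : ℝ) ^ 2 ≤ 1 / D :=
  (sum_le_sum_of_subset_of_nonneg (fun p hp ↦ mem_Ioc.2 ⟨hJ p hp, le_sup (f := id) hp⟩)
    fun _ _ _ ↦ by positivity).trans (sum_Ioc_one_div_sq_le hD (J.sup id))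

lemma le_of_pow_four_le (hl0 : l ≠ 0) (hl : l ^ 5 < N) (hp : p ^ 4 ≤ l ^ 2 * N) : p ≤ N := by
  refine le_of_pow_le_pow_left₀ four_ne_zero N.zero_le (hp.trans ?_)
  calc l ^ 2 * N ≤ l ^ 5 * N := by
        gcongr
        · omega
        · norm_num
    _ ≤ N * N := by gcongr
    _ = N ^ 2 := (sq N).symm
    _ ≤ N ^ 4 := Nat.pow_le_pow_right (by omega) (by norm_num)

lemma mul_lt_of_pow_four_le (hT : T ^ 12 ≤ l) (hl : l ^ 5 < N) (hp : p ^ 4 ≤ l ^ 2 * N)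
    (hln : N ≤ n * l) : p * l ^ 2 * T ^ 3 < n := by
  refine lt_of_mul_lt_mul_right (a := l) (lt_of_lt_of_le ?_ hln) l.zero_le
  refine lt_of_pow_lt_pow_left₀ 4 N.zero_le ?_
  calc (p * l ^ 2 * T ^ 3 * l) ^ 4 = p ^ 4 * (l ^ 12 * T ^ 12) := by ring
    _ ≤ l ^ 2 * N * (l ^ 12 * l) := by gcongr
    _ = (l ^ 5) ^ 3 * N := by ring
    _ < N ^ 3 * N := by gcongr; omega
    _ = N ^ 4 := by ring

lemma harmonic_le_two_mul (hl : 2 ≤ l) (hN : N ≤ 2 ^ (l + 1)) : (harmonic N : ℝ) ≤ 2 * l := by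
  have hl2 : (2 : ℝ) ≤ l := mod_cast hl
  have := harmonic_le_one_add_of_le_two_pow hN
  push_cast at this
  linarith

lemma countUpTo_sq_le_card_divisors_le (hl : 2 ≤ l) (hN : N ≤ 2 ^ (l + 1)) :
    countUpTo N (fun n ↦ (l : ℝ) ^ 2 ≤ #n.divisors) ≤ 2 * (N / l : ℝ) := by
  have : countUpTo N (fun n ↦ (l : ℝ) ^ 2 ≤ #n.divisors) * (l : ℝ) ^ 2 ≤
      2 * (N / l : ℝ) * (l : ℝ) ^ 2 :=
    calc _ ≤ (N : ℝ) * harmonic N := countUpTo_le_card_divisors_mul_le _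
      _ ≤ N * (2 * l) := by
          gcongr
          exact harmonic_le_two_mul hl hN
      _ = 2 * (N / l : ℝ) * (l : ℝ) ^ 2 := by field_simp
  exact le_of_mul_le_mul_right this (by positivity)

lemma sum_badAt_bound_le (hl : 2 ≤ l) (hN : N ≤ 2 ^ (l + 1)) {J : Finset ℕ}
    (hJ : ∀ p ∈ J, l ^ 2 < p ∧ p ≤ N) :
    ∑ p ∈ J, (2 * (N / (p * l ^ 2 : ℕ)) + 3 * N * harmonic N / (p : ℝ) ^ 2) ≤ 10 * (N / l : ℝ) := by
  have harmonic_le := harmonic_le_two_mul hl hN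
  have sum_le : ∑ p ∈ J, (1 : ℝ) / p ≤ 2 * l := by
    refine le_trans ?_ harmonic_le
    rw [← sum_Icc_one_div_eq_harmonic]
    exact sum_le_sum_of_subset_of_nonneg
      (fun p hp ↦ mem_Icc.2 ⟨by have := hJ p hp; omega, (hJ p hp).2⟩) fun _ _ _ ↦ by positivity
  have sum_sq_le : ∑ p ∈ J, (1 : ℝ) / (p : ℝ) ^ 2 ≤ 1 / (l : ℝ) ^ 2 :=
    mod_cast sum_one_div_sq_le_of_lt (by positivity) fun p hp ↦ (hJ p hp).1
  calc ∑ p ∈ J, (2 * (N / (p * l ^ 2 : ℕ)) + 3 * N * harmonic N / (p : ℝ) ^ 2)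
      = 2 * (N / (l : ℝ) ^ 2) * ∑ p ∈ J, (1 : ℝ) / p +
          3 * N * harmonic N * ∑ p ∈ J, (1 : ℝ) / (p : ℝ) ^ 2 := by
        rw [sum_add_distrib, mul_sum, mul_sum]
        congr 1 <;> refine sum_congr rfl fun p _ ↦ ?_
        · push_cast
          ring
        · ring
    _ ≤ 2 * (N / (l : ℝ) ^ 2) * (2 * l) + 3 * N * (2 * l) * (1 / (l : ℝ) ^ 2) := by gcongr
    _ = 10 * (N / l : ℝ) := by
        field_simp
        ring

lemma countUpTo_badAt_le_of_pow_le (hp : p.Prime) (hl : 2 ≤ l) (hT : T ^ 12 ≤ l)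
    (hlp : l ^ 16 ≤ p) (N : ℕ) :
    countUpTo N (fun n ↦ BadAt p n ∧ #n.divisors ≤ l ^ 2 ∧ p * l ^ 2 * T ^ 3 < n ∧
      ∀ b, T < b → ¬ b ^ 2 ∣ n) ≤
      2 * (N / (p * l ^ 2 : ℕ)) + 3 * N * harmonic N / (p : ℝ) ^ 2 := by
  have pow_lt {e : ℕ} (he : e < 16) : l ^ e < p :=
    (Nat.pow_lt_pow_right (by omega) he).trans_le hlp
  refine countUpTo_badAt_le hp (by have := hp.ne_zero; positivity) ?_ ?_ N
  · calc l ^ 2 * (p * l ^ 2) ^ 3 = l ^ 8 * p ^ 3 := by ring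
      _ < p * p ^ 3 := Nat.mul_lt_mul_of_pos_right (pow_lt (by norm_num)) (pow_pos hp.pos 3)
      _ = p ^ 4 := by ring
  · calc T ^ 6 ≤ (T ^ 6) ^ 2 := Nat.le_self_pow two_ne_zero _
      _ = T ^ 12 := by ring
      _ ≤ l ^ 1 := by rwa [pow_one]
      _ < p := pow_lt (by norm_num)

lemma countUpTo_exists_badAt_ge_le (hl : 2 ≤ l) (hN : N ≤ 2 ^ (l + 1)) (hlN : l ^ 5 < N)
    (hT : T ^ 12 ≤ l) :
    countUpTo N (fun n ↦ (∀ b, T < b → ¬ b ^ 2 ∣ n) ∧ ∃ p, p.Prime ∧ l ^ 16 ≤ p ∧ BadAt p n) ≤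
      13 * (N / l : ℝ) := by
  set J : Finset ℕ := {p ∈ Icc (l ^ 16) N | p.Prime}
  have mem_J {p : ℕ} : p ∈ J ↔ (l ^ 16 ≤ p ∧ p ≤ N) ∧ p.Prime := by simp [J]
  have sq_lt : l ^ 2 < l ^ 16 := Nat.pow_lt_pow_right (by omega) (by norm_num)
  calc _ ≤ countUpTo N (fun n ↦ n * l < N ∨ (l : ℝ) ^ 2 ≤ #n.divisors ∨ ∃ p ∈ J, BadAt p n ∧
          #n.divisors ≤ l ^ 2 ∧ p * l ^ 2 * T ^ 3 < n ∧ ∀ b, T < b → ¬ b ^ 2 ∣ n) := by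
        refine countUpTo_mono fun n _ hnN ⟨hsq, p, hp, hlp, hbad⟩ ↦
          or_iff_not_imp_left.2 fun hln ↦ or_iff_not_imp_left.2 fun hcard ↦ ?_
        rw [not_lt] at hln
        replace hcard : #n.divisors < l ^ 2 := by exact_mod_cast not_le.1 hcard
        have pow_le : p ^ 4 ≤ l ^ 2 * N :=
          hbad.pow_four_le ((Nat.le_self_pow (by norm_num) l).trans_lt hlN) hnN hln hcard.le
        exact ⟨p, mem_J.2 ⟨⟨hlp, le_of_pow_four_le (by omega) hlN pow_le⟩, hp⟩, hbad, hcard.le,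
          mul_lt_of_pow_four_le hT hlN pow_le hln, hsq⟩
    _ ≤ N / l + (2 * (N / l : ℝ) + 10 * (N / l : ℝ)) :=
        (countUpTo_or_le _ _).trans <| add_le_add (countUpTo_mul_lt_le (by omega)) <|
          (countUpTo_or_le _ _).trans <| add_le_add (countUpTo_sq_le_card_divisors_le hl hN) <|
            (countUpTo_exists_le _ _).trans <| (sum_le_sum fun p hp ↦
              countUpTo_badAt_le_of_pow_le (mem_J.1 hp).2 hl hT (mem_J.1 hp).1.1 N).trans <|
                sum_badAt_bound_le hl hN fun p hp ↦
                  ⟨sq_lt.trans_le (mem_J.1 hp).1.1, (mem_J.1 hp).1.2⟩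
    _ = 13 * (N / l : ℝ) := by ring

end LargePrimes

/-! ### Bad primes of intermediate size -/

section MediumPrimes

variable {T N : ℕ}

lemma countUpTo_exists_mem_badAt_le {J S : Finset ℕ} {Z : ℕ} (hJ : ∀ p ∈ J, p.Prime)
    (hS : ∀ q ∈ S, q.Prime ∧ T < q ∧ q ≤ Z) (hJS : ∀ p ∈ J, ∀ q ∈ S, p ^ 3 < q) :
    countUpTo N (fun n ↦ (∀ b, T < b → ¬ b ^ 2 ∣ n) ∧ ∃ p ∈ J, BadAt p n) ≤
      countUpTo N (fun n ↦ ∀ q ∈ S, ¬ q ∣ n) + ∑ p ∈ J, N * harmonic Z * (2 / (p : ℝ) ^ 3) := by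
  calc countUpTo N (fun n ↦ (∀ b, T < b → ¬ b ^ 2 ∣ n) ∧ ∃ p ∈ J, BadAt p n)
      ≤ countUpTo N (fun n ↦ (∀ q ∈ S, ¬ q ∣ n) ∨ ∃ p ∈ J, BadAt p n ∧
          ∃ q, q.Prime ∧ UnitaryDvd q n ∧ p ^ 3 < q ∧ q ≤ Z) := by
        refine countUpTo_mono fun n _ _ ⟨hsq, p, hp, hbad⟩ ↦ or_iff_not_imp_left.2 fun hn ↦ ?_
        push Not at hn
        obtain ⟨q, hq, hqn⟩ := hn
        obtain ⟨hqp, hTq, hqZ⟩ := hS q hq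
        exact ⟨p, hp, hbad, q, hqp, unitaryDvd_of_prime hqp hqn (hsq q hTq), hJS p hp q hq, hqZ⟩
    _ ≤ _ := (countUpTo_or_le _ _).trans <| by
        gcongr
        exact (countUpTo_exists_le _ _).trans <| sum_le_sum fun p hp ↦
          countUpTo_badAt_unitaryDvd_le_of_le (hJ p hp) N Z

lemma sum_mul_harmonic_mul_le {r : ℕ} (hr : 1 < r) {J : Finset ℕ} (hJ : ∀ p ∈ J, r ^ 2 < p) :
    ∑ p ∈ J, N * harmonic (2 ^ r) * (2 / (p : ℝ) ^ 3) ≤ 4 * (N / r : ℝ) := by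
  have harmonic_le : (harmonic (2 ^ r) : ℝ) ≤ 2 * r := by
    have := harmonic_le_one_add_of_le_two_pow (le_refl (2 ^ r))
    have hr1 : (1 : ℝ) ≤ r := mod_cast hr.le
    linarith
  have sum_sq_le : ∑ p ∈ J, (1 : ℝ) / (p : ℝ) ^ 2 ≤ 1 / (r : ℝ) ^ 2 :=
    mod_cast sum_one_div_sq_le_of_lt (by positivity) hJ
  calc ∑ p ∈ J, N * harmonic (2 ^ r) * (2 / (p : ℝ) ^ 3)
      ≤ ∑ p ∈ J, N * (2 * r) * (2 / (p : ℝ) ^ 2) := by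
        refine sum_le_sum fun p hp ↦ ?_
        have hp1 : (1 : ℝ) ≤ p := by exact_mod_cast (Nat.zero_le _).trans_lt (hJ p hp)
        have : (0 : ℝ) < p := by linarith
        gcongr
        norm_num
    _ = 4 * (N * r) * ∑ p ∈ J, (1 : ℝ) / (p : ℝ) ^ 2 := by
        rw [mul_sum]
        exact sum_congr rfl fun p _ ↦ by ring
    _ ≤ 4 * (N * r) * (1 / (r : ℝ) ^ 2) := by gcongr
    _ = 4 * (N / r : ℝ) := by field_simp

lemma exists_forall_two_pow_div_le_primeRecipSum : ∃ i₀, ∀ i, i₀ ≤ i →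
    (2 : ℝ) ^ i / 192 ≤ primeRecipSum (2 ^ 2 ^ (i + 7)) (2 ^ 2 ^ 2 ^ i) := by
  obtain ⟨t₀, ht₀⟩ := exists_forall_le_primeRecipSum
  refine ⟨max t₀ 6, fun i hi ↦ ?_⟩
  obtain ⟨hti, hi6⟩ := max_le_iff.1 hi
  have hpow : 2 * (i + 7) ≤ 2 ^ i := by
    clear hi hti
    induction i, hi6 using Nat.le_induction with
    | base => norm_num
    | succ i _ ih =>
      rw [pow_succ]
      omega
  refine le_trans ?_ (ht₀ (i + 7) (2 ^ i) (by omega) (by omega))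
  have : 2 * ((i : ℝ) + 7) ≤ 2 ^ i := mod_cast hpow
  push_cast
  linarith

lemma exists_forall_countUpTo_forall_prime_not_dvd_le : ∃ i₀, ∀ i N, i₀ ≤ i → 2 ^ 2 ^ 2 ^ i ≤ N →
    countUpTo N (fun n ↦ ∀ q ∈ {q ∈ Ioc (2 ^ 2 ^ (i + 7)) (2 ^ 2 ^ 2 ^ i) | q.Prime}, ¬ q ∣ n) ≤
      576 * (N / 2 ^ i : ℝ) := by
  obtain ⟨i₀, hi₀⟩ := exists_forall_two_pow_div_le_primeRecipSum
  refine ⟨i₀, fun i N hi hN ↦ ?_⟩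
  have card_le : #{q ∈ Ioc (2 ^ 2 ^ (i + 7)) (2 ^ 2 ^ 2 ^ i) | q.Prime} ≤ N := by
    refine (card_filter_le _ _).trans ?_
    rw [Nat.card_Ioc]
    exact (Nat.sub_le _ _).trans hN
  refine (countUpTo_forall_not_dvd_le N _ (fun p hp q hq ↦ ?_) card_le (by positivity)
    (hi₀ i hi)).trans_eq (by ring)
  exact (Nat.coprime_primes (mem_filter.1 hp).2 (mem_filter.1 hq).2).2

lemma exists_forall_countUpTo_badAt_block_le : ∃ i₀, ∀ i T N, i₀ ≤ i → T ≤ 2 ^ 2 ^ (i + 4) →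
    2 ^ 2 ^ 2 ^ i ≤ N →
    countUpTo N (fun n ↦ (∀ b, T < b → ¬ b ^ 2 ∣ n) ∧
      ∃ p, p.Prime ∧ 2 ^ 2 ^ (i + 4) ≤ p ∧ p < 2 ^ 2 ^ (i + 5) ∧ BadAt p n) ≤
      580 * (N / 2 ^ i : ℝ) := by
  obtain ⟨i₀, hi₀⟩ := exists_forall_countUpTo_forall_prime_not_dvd_le
  refine ⟨i₀, fun i T N hi hT hN ↦ ?_⟩
  have turan := hi₀ i N hi hN
  have pow_lt {a b : ℕ} (h : a < b) : 2 ^ 2 ^ a < 2 ^ 2 ^ b :=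
    Nat.pow_lt_pow_right one_lt_two (Nat.pow_lt_pow_right one_lt_two h)
  set J : Finset ℕ := {p ∈ Ico (2 ^ 2 ^ (i + 4)) (2 ^ 2 ^ (i + 5)) | p.Prime} with hJ
  set S : Finset ℕ := {q ∈ Ioc (2 ^ 2 ^ (i + 7)) (2 ^ 2 ^ 2 ^ i) | q.Prime} with hS
  have mem_J {p : ℕ} : p ∈ J ↔ (2 ^ 2 ^ (i + 4) ≤ p ∧ p < 2 ^ 2 ^ (i + 5)) ∧ p.Prime := by
    rw [hJ, mem_filter, mem_Ico]
  have mem_S {q : ℕ} : q ∈ S ↔ (2 ^ 2 ^ (i + 7) < q ∧ q ≤ 2 ^ 2 ^ 2 ^ i) ∧ q.Prime := by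
    rw [hS, mem_filter, mem_Ioc]
  have cube_lt (p) (hp : p ∈ J) (q) (hq : q ∈ S) : p ^ 3 < q := by
    calc p ^ 3 ≤ (2 ^ 2 ^ (i + 5)) ^ 3 := Nat.pow_le_pow_left (mem_J.1 hp).1.2.le 3
      _ ≤ (2 ^ 2 ^ (i + 5)) ^ 4 := Nat.pow_le_pow_right (by positivity) (by norm_num)
      _ = 2 ^ 2 ^ (i + 7) := by ring
      _ < q := (mem_S.1 hq).1.1
  have sq_lt (p) (hp : p ∈ J) : (2 ^ 2 ^ i) ^ 2 < p := by
    calc (2 ^ 2 ^ i) ^ 2 = 2 ^ 2 ^ (i + 1) := by ring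
      _ < 2 ^ 2 ^ (i + 4) := pow_lt (by omega)
      _ ≤ p := (mem_J.1 hp).1.1
  calc _ ≤ countUpTo N (fun n ↦ (∀ b, T < b → ¬ b ^ 2 ∣ n) ∧ ∃ p ∈ J, BadAt p n) :=
        countUpTo_mono fun n _ _ ⟨hsq, p, hp, hle, hlt, hbad⟩ ↦
          ⟨hsq, p, mem_J.2 ⟨⟨hle, hlt⟩, hp⟩, hbad⟩
    _ ≤ 576 * (N / 2 ^ i : ℝ) + 4 * (N / (2 ^ 2 ^ i : ℕ)) :=
        (countUpTo_exists_mem_badAt_le (fun p hp ↦ (mem_J.1 hp).2) (fun q hq ↦ ⟨(mem_S.1 hq).2,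
          hT.trans_lt ((pow_lt (by omega)).trans (mem_S.1 hq).1.1), (mem_S.1 hq).1.2⟩)
            cube_lt).trans <| add_le_add turan <|
              sum_mul_harmonic_mul_le (Nat.one_lt_two_pow (by positivity)) sq_lt
    _ ≤ 576 * (N / 2 ^ i : ℝ) + 4 * (N / 2 ^ i) := by
        have : (2 : ℝ) ^ i ≤ (2 ^ 2 ^ i : ℕ) := mod_cast Nat.lt_two_pow_self.le
        gcongr
    _ = 580 * (N / 2 ^ i : ℝ) := by ring

lemma exists_two_pow_two_pow_le_lt {c p : ℕ} (h : 2 ^ 2 ^ c ≤ p) :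
    ∃ i, c ≤ i ∧ 2 ^ 2 ^ i ≤ p ∧ p < 2 ^ 2 ^ (i + 1) := by
  have le_log : 2 ^ c ≤ Nat.log 2 p := Nat.le_log_of_pow_le one_lt_two h
  have hp : p ≠ 0 := (Nat.two_pow_pos _).trans_le h |>.ne'
  have hlog : Nat.log 2 p ≠ 0 := (Nat.two_pow_pos _).trans_le le_log |>.ne'
  refine ⟨Nat.log 2 (Nat.log 2 p), Nat.le_log_of_pow_le one_lt_two le_log, ?_, ?_⟩
  · exact Nat.pow_le_of_le_log hp (Nat.pow_log_le_self 2 hlog)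
  · exact Nat.lt_pow_of_log_lt one_lt_two (Nat.lt_pow_succ_log_self one_lt_two _)

lemma exists_forall_countUpTo_exists_badAt_lt_le : ∃ c₀, ∀ c N l, c₀ ≤ c → 2 ^ l ≤ N →
    countUpTo N (fun n ↦ (∀ b, 2 ^ 2 ^ (c + 4) < b → ¬ b ^ 2 ∣ n) ∧
      ∃ p, p.Prime ∧ 2 ^ 2 ^ (c + 4) < p ∧ p < l ^ 16 ∧ BadAt p n) ≤ 1160 * (N / 2 ^ c : ℝ) := by
  obtain ⟨i₀, hi₀⟩ := exists_forall_countUpTo_badAt_block_le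
  refine ⟨i₀, fun c N l hc hN ↦ ?_⟩
  set J : Finset ℕ := {i ∈ Ico c l | 2 ^ 2 ^ i ≤ l} with hJ
  have mem_J {i : ℕ} : i ∈ J ↔ (c ≤ i ∧ i < l) ∧ 2 ^ 2 ^ i ≤ l := by rw [hJ, mem_filter, mem_Ico]
  have sum_geom_le : ∑ i ∈ J, (1 / 2 : ℝ) ^ i ≤ (1 / 2) ^ c / (1 - 1 / 2) :=
    (sum_le_sum_of_subset_of_nonneg (filter_subset _ _) fun _ _ _ ↦ by positivity).trans
      (geom_sum_Ico_le_of_lt_one (by norm_num) (by norm_num))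
  calc _ ≤ countUpTo N (fun n ↦ ∃ i ∈ J, (∀ b, 2 ^ 2 ^ (c + 4) < b → ¬ b ^ 2 ∣ n) ∧
          ∃ p, p.Prime ∧ 2 ^ 2 ^ (i + 4) ≤ p ∧ p < 2 ^ 2 ^ (i + 5) ∧ BadAt p n) := by
        refine countUpTo_mono fun n _ _ ⟨hsq, p, hp, hcp, hpl, hbad⟩ ↦ ?_
        obtain ⟨j, hcj, hjp, hpj⟩ := exists_two_pow_two_pow_le_lt hcp.le
        obtain ⟨i, rfl⟩ := Nat.exists_eq_add_of_le' (show 4 ≤ j by omega)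
        have hil : 2 ^ 2 ^ i < l := lt_of_pow_lt_pow_left₀ 16 l.zero_le <|
          calc (2 ^ 2 ^ i) ^ 16 = 2 ^ 2 ^ (i + 4) := by ring
            _ < l ^ 16 := hjp.trans_lt hpl
        exact ⟨i, mem_J.2 ⟨⟨by omega, (Nat.lt_two_pow_self.trans Nat.lt_two_pow_self).trans hil⟩,
          hil.le⟩, hsq, p, hp, hjp, hpj, hbad⟩
    _ ≤ ∑ i ∈ J, 580 * (N / 2 ^ i : ℝ) := by
        refine (countUpTo_exists_le _ _).trans <| sum_le_sum fun i hi ↦ ?_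
        obtain ⟨⟨hci, -⟩, hil⟩ := mem_J.1 hi
        exact hi₀ i _ N (hc.trans hci) (by gcongr <;> norm_num)
          ((Nat.pow_le_pow_right two_pos hil).trans hN)
    _ = 580 * N * ∑ i ∈ J, (1 / 2 : ℝ) ^ i := by
        rw [mul_sum]
        exact sum_congr rfl fun i _ ↦ by rw [one_div_pow]; ring
    _ ≤ 580 * N * ((1 / 2) ^ c / (1 - 1 / 2)) := by gcongr
    _ = 1160 * (N / 2 ^ c : ℝ) := by rw [one_div_pow]; ring

end MediumPrimes

/-! ### The exceptional set -/

section Exceptional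

variable {ε : ℝ}

lemma eventually_pow_five_lt_two_pow : ∀ᶠ l : ℕ in atTop, l ^ 5 < 2 ^ l := by
  have h : (fun l : ℕ ↦ (l : ℝ) ^ 5) =o[atTop] fun l : ℕ ↦ (2 : ℝ) ^ l :=
    isLittleO_pow_const_const_pow_of_one_lt 5 one_lt_two
  filter_upwards [h.def one_half_pos] with l hl
  rw [Real.norm_of_nonneg (by positivity), Real.norm_of_nonneg (by positivity)] at hl
  have : (l : ℝ) ^ 5 < 2 ^ l := hl.trans_lt (by linarith [pow_pos (two_pos (α := ℝ)) l])
  exact_mod_cast this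

lemma eventually_countUpTo_exists_badAt_log_le (T : ℕ) (hε : 0 < ε) :
    ∀ᶠ N in atTop, countUpTo N (fun n ↦ (∀ b, T < b → ¬ b ^ 2 ∣ n) ∧
      ∃ p, p.Prime ∧ Nat.log 2 N ^ 16 ≤ p ∧ BadAt p n) ≤ ε * N := by
  have log_tendsto : Tendsto (Nat.log 2) atTop atTop := tendsto_atTop.2 fun l ↦
    (eventually_ge_atTop (2 ^ l)).mono fun _ ↦ Nat.le_log_of_pow_le one_lt_two
  filter_upwards [eventually_ne_atTop 0, log_tendsto.eventually eventually_pow_five_lt_two_pow,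
    log_tendsto.eventually_ge_atTop 2, log_tendsto.eventually_ge_atTop (T ^ 12),
    (tendsto_natCast_atTop_atTop.comp log_tendsto).eventually_ge_atTop (13 / ε)]
    with N hN hl5 hl2 hlT hlε
  calc _ ≤ 13 * (N / Nat.log 2 N : ℝ) := countUpTo_exists_badAt_ge_le hl2
        (Nat.lt_pow_succ_log_self one_lt_two N).le (hl5.trans_le (Nat.pow_log_le_self 2 hN)) hlT
    _ ≤ 13 * (N / (13 / ε) : ℝ) := by
        gcongr
        exact hlε
    _ = ε * N := by field_simp

lemma frequently_eventually_countUpTo_exists_badAt_le (hε : 0 < ε) :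
    ∃ᶠ T in atTop, ∀ᶠ N in atTop, countUpTo N (fun n ↦ (∀ b, T < b → ¬ b ^ 2 ∣ n) ∧
      ∃ p, p.Prime ∧ T < p ∧ BadAt p n) ≤ ε * N := by
  obtain ⟨c₀, hc₀⟩ := exists_forall_countUpTo_exists_badAt_lt_le
  refine frequently_atTop.2 fun M ↦ ?_
  obtain ⟨c, ⟨hcc₀, hMc⟩, hcε⟩ := ((eventually_ge_atTop c₀).and (eventually_ge_atTop M)).and
    ((tendsto_pow_atTop_atTop_of_one_lt (one_lt_two (α := ℝ))).eventually_ge_atTop (2320 / ε))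
      |>.exists
  have hMT : M ≤ 2 ^ 2 ^ (c + 4) := (hMc.trans (Nat.le_add_right c 4)).trans
    (Nat.lt_two_pow_self.trans Nat.lt_two_pow_self).le
  refine ⟨2 ^ 2 ^ (c + 4), hMT, ?_⟩
  filter_upwards [eventually_ne_atTop 0, eventually_countUpTo_exists_badAt_log_le
    (2 ^ 2 ^ (c + 4)) (half_pos hε)] with N hN large
  have medium := hc₀ c N (Nat.log 2 N) hcc₀ (Nat.pow_log_le_self 2 hN)
  set T := 2 ^ 2 ^ (c + 4)
  set l := Nat.log 2 N
  calc _ ≤ countUpTo N (fun n ↦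
          ((∀ b, T < b → ¬ b ^ 2 ∣ n) ∧ ∃ p, p.Prime ∧ T < p ∧ p < l ^ 16 ∧ BadAt p n) ∨
          ((∀ b, T < b → ¬ b ^ 2 ∣ n) ∧ ∃ p, p.Prime ∧ l ^ 16 ≤ p ∧ BadAt p n)) :=
        countUpTo_mono fun n _ _ ⟨hsq, p, hp, hTp, hbad⟩ ↦ (lt_or_ge p (l ^ 16)).imp
          (fun h ↦ ⟨hsq, p, hp, hTp, h, hbad⟩) fun h ↦ ⟨hsq, p, hp, h, hbad⟩
    _ ≤ 1160 * (N / 2 ^ c : ℝ) + ε / 2 * N :=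
        (countUpTo_or_le _ _).trans (add_le_add medium large)
    _ ≤ 1160 * (N / (2320 / ε) : ℝ) + ε / 2 * N := by gcongr
    _ = ε * N := by
        field_simp
        norm_num

lemma eventually_countUpTo_not_kfree_iff_le {k : ℕ} (hk : 4 ≤ k) (hε : 0 < ε) :
    ∀ᶠ N in atTop, countUpTo N (fun n ↦ ¬ (KFree k n ↔ KFree k (s n))) ≤ ε * N := by
  obtain ⟨T, hbad, hT0, hT⟩ := (frequently_eventually_countUpTo_exists_badAt_le
    (show 0 < ε / 3 by positivity)).and_eventually ((eventually_ne_atTop 0).and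
      (tendsto_natCast_atTop_atTop.eventually_ge_atTop (3 / ε))) |>.exists
  obtain ⟨S, hS, hSsum⟩ := exists_finset_prime_dvd_succ_le_sum_one_div
    (pow_ne_zero k T.factorial_ne_zero) T (9 / ε)
  filter_upwards [hbad, eventually_ge_atTop #S] with N hbad hSN
  calc countUpTo N (fun n ↦ ¬ (KFree k n ↔ KFree k (s n)))
      ≤ countUpTo N (fun n ↦ (∃ b, T < b ∧ b ^ 2 ∣ n) ∨ (∀ q ∈ S, ¬ q ∣ n) ∨
          ((∀ b, T < b → ¬ b ^ 2 ∣ n) ∧ ∃ p, p.Prime ∧ T < p ∧ BadAt p n)) := by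
        refine countUpTo_mono fun n _ _ hn ↦
          or_iff_not_imp_left.2 fun hsq ↦ or_iff_not_imp_left.2 fun hqn ↦ ?_
        push Not at hsq hqn
        obtain ⟨q, hq, hqn⟩ := hqn
        obtain ⟨hqp, hTq, hdvd⟩ := hS q hq
        exact ⟨hsq, exists_badAt_of_not_kfree_iff hk hsq hqp hTq hdvd hqn hn⟩
    _ ≤ N / T + (3 * N / (9 / ε) + ε / 3 * N) :=
        (countUpTo_or_le _ _).trans <| add_le_add (countUpTo_exists_sq_dvd_le hT0 N) <|
          (countUpTo_or_le _ _).trans <| add_le_add (countUpTo_forall_not_dvd_le N S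
            (fun p hp q hq ↦ (Nat.coprime_primes (hS p hp).1 (hS q hq).1).2) hSN (by positivity)
              hSsum) hbad
    _ ≤ N / (3 / ε) + (3 * N / (9 / ε) + ε / 3 * N) := by gcongr
    _ = ε * N := by
        field_simp
        ring

end Exceptional

theorem kfree_iff_kfree_s_ae (k : ℕ) (hk : 4 ≤ k) :
    (fun x : ℝ => (((Finset.Icc 1 ⌊x⌋₊).filter
        (fun n => ¬ (KFree k n ↔ KFree k (s n)))).card : ℝ))
      =o[atTop] (fun x : ℝ => x) := by
  refine Asymptotics.isLittleO_iff.2 fun ε hε ↦ ?_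
  filter_upwards [tendsto_nat_floor_atTop.eventually (eventually_countUpTo_not_kfree_iff_le hk hε),
    eventually_ge_atTop 0] with x hx hx0
  rw [Real.norm_of_nonneg (Nat.cast_nonneg _), Real.norm_of_nonneg hx0]
  calc _ = countUpTo ⌊x⌋₊ (fun n ↦ ¬ (KFree k n ↔ KFree k (s n))) := by
        rw [countUpTo]
        congr!
    _ ≤ ε * ⌊x⌋₊ := hx
    _ ≤ ε * x := by
        gcongr
        exact Nat.floor_le hx0
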